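/- The variational principle for slow entropy fails at the intermediate scale a^{int1,5}: there exist an integer q₁ ≥ 2 and a uniquely ergodic C^∞ diffeomorphism T of the torus 𝕋² whose unique invariant Borel probability measure is the Haar–Lebesgue measure λ, such that the upper measure-theoretic slow entropy of (T,λ) with respect to the scaling family a^{int1,5}_m(t) (with base q₁) equals 0, while the upper topological slow entropy of T with respect to the same scaling family equals 1. -/

import Mathlib

open MeasureTheory Filter Set
open scoped Topology ENNReal NNReal

noncomputable section

/-- The Bowen metric `d_n^T(x,y) = max_{0 ≤ i ≤ n-1} d(T^i x, T^i y)`. -/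
def bowenDist {X : Type*} [PseudoMetricSpace X] (T : X → X) (n : ℕ) (x y : X) : ℝ :=
  (((Finset.range n).sup fun i => nndist (T^[i] x) (T^[i] y)) : ℝ≥0)

/-- `N_{d_n^T}(ε)`: the minimal number of `(ε,n)`-Bowen balls of `T` needed to cover the
whole space. -/
def bowenCoverNum {X : Type*} [PseudoMetricSpace X] (T : X → X) (n : ℕ) (ε : ℝ) : ℕ :=
  sInf {N : ℕ | ∃ F : Finset X, F.card = N ∧ ∀ y : X, ∃ x ∈ F, bowenDist T n x y < ε}

/-- `N(ε)`: the supremum (`0` if the set is empty, by the `Real.sSup` convention) of all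
`t > 0` such that `limsup_n N_{d_n^T}(ε) / a_n(t) > 0`. -/
def topSlowEntFun {X : Type*} [PseudoMetricSpace X] (T : X → X) (a : ℕ → ℝ → ℝ) (ε : ℝ) : ℝ :=
  sSup {t : ℝ | 0 < t ∧
    0 < Filter.atTop.limsup fun n => (bowenCoverNum T n ε : ℝ≥0∞) / ENNReal.ofReal (a n t)}

/-- The upper topological slow entropy of `T` with respect to the scaling family `a`
equals `E`, i.e. `N(ε) → E` as `ε → 0⁺`. -/
def HasUpperTopSlowEntropy {X : Type*} [PseudoMetricSpace X] (T : X → X)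
    (a : ℕ → ℝ → ℝ) (E : ℝ) : Prop :=
  Filter.Tendsto (topSlowEntFun T a) (𝓝[>] (0 : ℝ)) (𝓝 E)

/-- The circle `𝕋¹ = ℝ/ℤ` with its quotient metric and Haar–Lebesgue probability
measure `volume`. -/
abbrev Torus1 : Type := AddCircle (1 : ℝ)

/-- The 2-torus `𝕋² = ℝ²/ℤ²`, with its quotient (flat) metric, its Borel σ-algebra and
its Haar–Lebesgue probability measure `volume`. -/
abbrev Torus2 : Type := AddCircle (1 : ℝ) × AddCircle (1 : ℝ)

/-- Canonical projection `ℝ² → 𝕋²`. -/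
def torusProj : ℝ × ℝ → Torus2 := fun p => ((p.1 : Torus1), (p.2 : Torus1))

/-- `F : ℝ² → ℝ²` is a lift of `T : 𝕋² → 𝕋²`. -/
def IsLiftOf (F : ℝ × ℝ → ℝ × ℝ) (T : Torus2 → Torus2) : Prop :=
  ∀ p, torusProj (F p) = T (torusProj p)

/-- `T` is a `C^k` diffeomorphism of the torus: it is a bijection and both `T` and `T⁻¹`
admit `C^k` lifts to the universal cover `ℝ²`. -/
def IsCkTorusDiffeo (k : ℕ∞) (T : Torus2 → Torus2) : Prop :=
  Function.Bijective T ∧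
  (∃ F : ℝ × ℝ → ℝ × ℝ, ContDiff ℝ k F ∧ IsLiftOf F T) ∧
  (∃ G : ℝ × ℝ → ℝ × ℝ, ContDiff ℝ k G ∧ IsLiftOf G (Function.invFun T))

/-- `T` is weakly mixing w.r.t. the measure `μ`: `T × T` is ergodic for `μ × μ`. -/
def WeaklyMixing {X : Type*} [MeasurableSpace X] (T : X → X) (μ : Measure X) : Prop :=
  Ergodic (fun p : X × X => (T p.1, T p.2)) (μ.prod μ)

/-- `T` is uniquely ergodic with the Haar–Lebesgue measure `volume` as its unique
invariant Borel probability measure. -/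
def UniquelyErgodicWithVolume (T : Torus2 → Torus2) : Prop :=
  MeasurePreserving T volume volume ∧
  ∀ μ : Measure Torus2, IsProbabilityMeasure μ → MeasurePreserving T μ μ → μ = volume

/-- `T` (preserving the Haar measure `volume` on `𝕋²`) is measure-theoretically isomorphic
to the rotation of the circle `𝕋¹ = ℝ/ℤ` by some irrational number `α`. -/
def IsoToIrrationalRotation (T : Torus2 → Torus2) : Prop :=
  ∃ α : ℝ, Irrational α ∧
    ∃ (A : Set Torus2) (B : Set Torus1) (ψ : Torus2 → Torus1) (φ : Torus1 → Torus2),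
      MeasurableSet A ∧ MeasurableSet B ∧
      volume Aᶜ = 0 ∧ volume Bᶜ = 0 ∧
      Set.MapsTo T A A ∧ Set.MapsTo (fun y : Torus1 => y + (α : Torus1)) B B ∧
      Measurable ψ ∧ Measurable φ ∧
      Set.MapsTo ψ A B ∧ Set.MapsTo φ B A ∧
      (∀ x ∈ A, φ (ψ x) = x) ∧ (∀ y ∈ B, ψ (φ y) = y) ∧
      Measure.map ψ volume = volume ∧
      (∀ x ∈ A, ψ (T x) = ψ x + (α : Torus1))

/-- A finite measurable partition of `X`. -/
structure FinMeasPartition (X : Type*) [MeasurableSpace X] where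
  card : ℕ
  piece : Fin card → Set X
  measurable : ∀ i, MeasurableSet (piece i)
  disjoint : Pairwise fun i j => Disjoint (piece i) (piece j)
  cover : (⋃ i, piece i) = Set.univ

open Classical in
/-- The normalized Hamming distance between the length-`n` `P`-codings of the `T`-orbits
of `x` and `y` (the codings differ at time `k` iff `T^k x` and `T^k y` lie in different
pieces of `P`). -/
def codeHammingDist {X : Type*} [MeasurableSpace X] (T : X → X) (P : FinMeasPartition X)
    (n : ℕ) (x y : X) : ℝ :=
  (((Finset.range n).filter fun k =>
      ¬ ∃ i, T^[k] x ∈ P.piece i ∧ T^[k] y ∈ P.piece i).card : ℝ) / n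

/-- `S^H_P(T,n,ε)`: the minimal number of `(ε,n)`-Hamming balls whose union has
`μ`-measure greater than `1 - ε`. -/
def hammingCoverNum {X : Type*} [MeasurableSpace X] (μ : Measure X) (T : X → X)
    (P : FinMeasPartition X) (n : ℕ) (ε : ℝ) : ℕ :=
  sInf {N : ℕ | ∃ F : Finset X, F.card = N ∧
    ENNReal.ofReal (1 - ε) < μ (⋃ x ∈ F, {y | codeHammingDist T P n x y < ε})}

/-- For a fixed partition `P` and `ε > 0`: the supremum (with the `Real.sSup` convention,
`0` if the set is empty) of all `t > 0` with `limsup_n S^H_P(T,n,ε)/a_n(t) > 0`. -/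
def measSlowEntFun {X : Type*} [MeasurableSpace X] (μ : Measure X) (T : X → X)
    (a : ℕ → ℝ → ℝ) (P : FinMeasPartition X) (ε : ℝ) : ℝ :=
  sSup {t : ℝ | 0 < t ∧
    0 < Filter.atTop.limsup fun n =>
      (hammingCoverNum μ T P n ε : ℝ≥0∞) / ENNReal.ofReal (a n t)}

/-- The upper measure-theoretic slow entropy of `(T,μ)` w.r.t. the scaling family `a`
equals `E`: for every finite measurable partition the limit as `ε → 0⁺` exists, and the
least upper bound over all partitions of these limits is `E`. -/
def HasUpperMeasSlowEntropy {X : Type*} [MeasurableSpace X] (μ : Measure X) (T : X → X)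
    (a : ℕ → ℝ → ℝ) (E : ℝ) : Prop :=
  (∀ P : FinMeasPartition X, ∃ e : ℝ,
      Filter.Tendsto (measSlowEntFun μ T a P) (𝓝[>] (0 : ℝ)) (𝓝 e)) ∧
  IsLUB {e : ℝ | ∃ P : FinMeasPartition X,
      Filter.Tendsto (measSlowEntFun μ T a P) (𝓝[>] (0 : ℝ)) (𝓝 e)} E

/-- `Γ_r(x) = (Γ(x^{1/r} + 1))^r`, where `Γ` is the Euler Gamma function. -/
def GammaR (r : ℕ) (x : ℝ) : ℝ := (Real.Gamma (x ^ ((r : ℝ)⁻¹) + 1)) ^ r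

/-- The inverse of `Γ_r` on `[1,∞)` (where `Γ_r` is strictly increasing with `Γ_r 1 = 1`). -/
def GammaRInv (r : ℕ) (y : ℝ) : ℝ := sSup {x : ℝ | 1 ≤ x ∧ GammaR r x ≤ y}

/-- The intermediate scaling family `a^{int1,r}_m(t) = m^(t / Γ_r⁻¹(ln m / ln q₁))`. -/
def intScale1 (r q₁ : ℕ) (m : ℕ) (t : ℝ) : ℝ :=
  (m : ℝ) ^ (t / GammaRInv r (Real.log m / Real.log q₁))

/-- The intermediate scaling family
`a^{int2,r}_m(t) = m^(t / (Γ_r⁻¹(ln m / ln q₁))^((r-2)/r))`. -/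
def intScale2 (r q₁ : ℕ) (m : ℕ) (t : ℝ) : ℝ :=
  (m : ℝ) ^ (t / GammaRInv r (Real.log m / Real.log q₁) ^ (((r : ℝ) - 2) / (r : ℝ)))

/-- The logarithmic scaling family `a^{ln}_m(t) = (ln m)^t`. -/
def logScale (m : ℕ) (t : ℝ) : ℝ := Real.log m ^ t

/-- The polynomial scaling family `a^{pol}_m(t) = m^t`. -/
def polScale (m : ℕ) (t : ℝ) : ℝ := (m : ℝ) ^ t

end

/-!
The diffeomorphism is a skew product over a Liouville rotation of the circle. Its cocycle is the
coboundary of a sum of ever thinner spike functions: the `j`-th one has period `1 / p j` and spikes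
of width `1 / (p j * a j)`, and `p (j + 1)` is so much larger than `a j` that the `j`-th summand of
the cocycle, a difference over one rotation step, is tiny in every `C^k` norm. The integrals of the
spike functions are summable, so their sum converges almost everywhere to a measurable transfer
function, and the system is measurably conjugate to a translation of the torus. A minimal
translation makes it uniquely ergodic, and Hamming cover numbers stay bounded. The Bowen metric,
however, sees every spike: up to time `p (j + 1)` it suffices to resolve the Lipschitz constant
`p j * a j` of the `j`-th spike function, while at time `p (j + 1)` about `a j` orbits that meet a
`j`-th spike at different times are separated. If `p 0, a 0, p 1, a 1, …` are consecutive terms of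
`q ^ (k ! ^ r)`, the intermediate scale with parameter `t` is exactly `(a j) ^ t` at time
`p (j + 1)`, and `p j` is negligible on this scale, so the critical exponent is `1`.
-/

noncomputable section

/-! ### Bowen cover numbers and slow entropy -/

section BowenCover

variable {X : Type*} [PseudoMetricSpace X] {T : X → X} {n : ℕ} {ε : ℝ}

theorem bowenDist_lt_iff (hε : 0 < ε) {x y : X} :
    bowenDist T n x y < ε ↔ ∀ i < n, dist (T^[i] x) (T^[i] y) < ε := by
  lift ε to ℝ≥0 using hε.le
  simp only [bowenDist, NNReal.coe_lt_coe, dist_nndist]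
  rw [Finset.sup_lt_iff (by exact_mod_cast hε)]
  simp only [Finset.mem_range]

theorem bowenCoverNum_le_card {F : Finset X} (hF : ∀ y, ∃ x ∈ F, bowenDist T n x y < ε) :
    bowenCoverNum T n ε ≤ F.card :=
  Nat.sInf_le ⟨F, rfl, hF⟩

theorem exists_finset_bowenDist_lt [CompactSpace X] (hT : Continuous T) (n : ℕ) (hε : 0 < ε) :
    ∃ F : Finset X, ∀ y, ∃ x ∈ F, bowenDist T n x y < ε := by
  have hnhds (x : X) : {y | bowenDist T n x y < ε} ∈ 𝓝 x := by
    simp only [bowenDist_lt_iff hε]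
    refine (eventually_all_finite (finite_lt_nat n)).2 fun i _ => ?_
    have hcont : Continuous fun y => dist (T^[i] x) (T^[i] y) :=
      continuous_const.dist (hT.iterate i)
    exact hcont.continuousAt.eventually_lt continuousAt_const (by simpa using hε)
  obtain ⟨F, -, hF⟩ := isCompact_univ.elim_nhds_subcover _ fun x _ => hnhds x
  exact ⟨F, fun y => by simpa using hF (mem_univ y)⟩

theorem card_le_bowenCoverNum [CompactSpace X] (hT : Continuous T) {ι : Type*} {s : Finset ι}
    {f : ι → X} (hε : 0 < ε)
    (hsep : ∀ a ∈ s, ∀ b ∈ s, a ≠ b → ∃ i < n, 2 * ε ≤ dist (T^[i] (f a)) (T^[i] (f b))) :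
    s.card ≤ bowenCoverNum T n ε := by
  obtain ⟨F, hF⟩ := exists_finset_bowenDist_lt hT n hε
  obtain ⟨F', hcard, hF'⟩ : bowenCoverNum T n ε ∈ {N : ℕ | ∃ F : Finset X, F.card = N ∧
      ∀ y : X, ∃ x ∈ F, bowenDist T n x y < ε} := Nat.sInf_mem ⟨_, F, rfl, hF⟩
  choose center hmem hdist using hF'
  rw [← hcard]
  refine Finset.card_le_card_of_injOn (fun a => center (f a)) (fun a _ => hmem _) ?_
  intro a ha b hb hab
  by_contra hne
  obtain ⟨i, hi, hfar⟩ := hsep a ha b hb hne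
  have ha' := (bowenDist_lt_iff hε).1 (hdist (f a)) i hi
  have hb' := (bowenDist_lt_iff hε).1 (hdist (f b)) i hi
  simp only at hab
  rw [← hab] at hb'
  linarith [dist_triangle_left (T^[i] (f a)) (T^[i] (f b)) (T^[i] (center (f a)))]

end BowenCover

section SlowEntropy

theorem limsup_natCast_div_ofReal_eq_zero {N : ℕ → ℕ} {b : ℕ → ℝ} (hb : ∀ᶠ n in atTop, 0 < b n)
    (h : Tendsto (fun n => (N n : ℝ) / b n) atTop (𝓝 0)) :
    atTop.limsup (fun n => (N n : ℝ≥0∞) / ENNReal.ofReal (b n)) = 0 := by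
  have hlim := ENNReal.tendsto_ofReal h
  rw [ENNReal.ofReal_zero] at hlim
  refine Tendsto.limsup_eq (hlim.congr' ?_)
  filter_upwards [hb] with n hn
  rw [ENNReal.ofReal_div_of_pos hn, ENNReal.ofReal_natCast]

theorem limsup_natCast_div_ofReal_pos {N : ℕ → ℕ} {b : ℕ → ℝ} {c : ℝ} (hc : 0 < c)
    (h : ∃ᶠ n in atTop, 0 < b n ∧ c * b n ≤ N n) :
    0 < atTop.limsup (fun n => (N n : ℝ≥0∞) / ENNReal.ofReal (b n)) := by
  refine (ENNReal.ofReal_pos.2 hc).trans_le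
    (le_limsup_of_frequently_le (h.mono fun n hn => ?_) (by isBoundedDefault))
  rw [← ENNReal.ofReal_natCast, ← ENNReal.ofReal_div_of_pos hn.1]
  exact ENNReal.ofReal_le_ofReal ((le_div_iff₀ hn.1).2 hn.2)

theorem hasUpperTopSlowEntropy_of_limsup {X : Type*} [PseudoMetricSpace X] {T : X → X}
    {a : ℕ → ℝ → ℝ} {E : ℝ} (hE : 0 ≤ E)
    (hlower : ∀ᶠ ε in 𝓝[>] (0 : ℝ), ∀ t, 0 < t → t < E →
      0 < atTop.limsup fun n => (bowenCoverNum T n ε : ℝ≥0∞) / ENNReal.ofReal (a n t))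
    (hupper : ∀ᶠ ε in 𝓝[>] (0 : ℝ), ∀ t, E < t →
      atTop.limsup (fun n => (bowenCoverNum T n ε : ℝ≥0∞) / ENNReal.ofReal (a n t)) = 0) :
    HasUpperTopSlowEntropy T a E := by
  refine tendsto_const_nhds.congr' ?_
  filter_upwards [hlower, hupper] with ε hlow hup
  set s := {t : ℝ | 0 < t ∧ 0 < atTop.limsup fun n =>
    (bowenCoverNum T n ε : ℝ≥0∞) / ENNReal.ofReal (a n t)}
  have hle : ∀ t ∈ s, t ≤ E := fun t ht => by
    by_contra! hlt
    exact ht.2.ne' (hup t hlt)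
  change E = sSup s
  refine le_antisymm (le_of_forall_lt fun c hc => ?_) (Real.sSup_le hle hE)
  rcases hE.eq_or_lt with rfl | hpos
  · exact hc.trans_le (Real.sSup_nonneg fun t ht => ht.1.le)
  · obtain ⟨t, hct, htE⟩ := exists_between (max_lt hc hpos)
    have ht : 0 < t := (le_max_right _ _).trans_lt hct
    exact ((le_max_left _ _).trans_lt hct).trans_le (le_csSup ⟨E, hle⟩ ⟨ht, hlow t ht htE⟩)

variable {X : Type*} [MeasurableSpace X] {μ : Measure X} {T : X → X} {a : ℕ → ℝ → ℝ}

theorem measSlowEntFun_eq_zero_of_hammingCoverNum_le {P : FinMeasPartition X} {ε : ℝ} {C : ℕ}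
    (ha : ∀ t > 0, Tendsto (a · t) atTop atTop)
    (hC : ∀ᶠ n in atTop, hammingCoverNum μ T P n ε ≤ C) : measSlowEntFun μ T a P ε = 0 := by
  suffices hempty : {t : ℝ | 0 < t ∧ 0 < atTop.limsup fun n =>
      (hammingCoverNum μ T P n ε : ℝ≥0∞) / ENNReal.ofReal (a n t)} = ∅ by
    rw [measSlowEntFun, hempty, Real.sSup_empty]
  refine eq_empty_of_forall_notMem fun t ⟨ht, hlim⟩ => hlim.ne' ?_
  have hpos := (ha t ht).eventually_gt_atTop 0
  refine limsup_natCast_div_ofReal_eq_zero hpos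
    (squeeze_zero' (hpos.mono fun n hn => by positivity) ?_ ((ha t ht).const_div_atTop (C : ℝ)))
  filter_upwards [hpos, hC] with n hn hle
  gcongr

theorem hasUpperMeasSlowEntropy_zero_of_hammingCoverNum_le
    (ha : ∀ t > 0, Tendsto (a · t) atTop atTop)
    (h : ∀ P : FinMeasPartition X, ∀ ε > 0, ∃ C, ∀ᶠ n in atTop, hammingCoverNum μ T P n ε ≤ C) :
    HasUpperMeasSlowEntropy μ T a 0 := by
  have hlim : ∀ P : FinMeasPartition X,
      Tendsto (measSlowEntFun μ T a P) (𝓝[>] (0 : ℝ)) (𝓝 0) := fun P => by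
    refine tendsto_const_nhds.congr' ?_
    filter_upwards [self_mem_nhdsWithin] with ε hε
    obtain ⟨C, hC⟩ := h P ε hε
    exact (measSlowEntFun_eq_zero_of_hammingCoverNum_le ha hC).symm
  refine ⟨fun P => ⟨0, hlim P⟩, ?_, fun b hb => hb ⟨⟨1, fun _ => univ, fun _ => .univ,
    fun i j hij => (hij (Subsingleton.elim i j)).elim, iUnion_const _⟩, hlim _⟩⟩
  rintro e ⟨P, hP⟩
  exact (tendsto_nhds_unique hP (hlim P)).le

end SlowEntropy

/-! ### Hamming cover numbers of systems conjugate to a translation -/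

namespace FinMeasPartition

variable {X Y : Type*} [MeasurableSpace X] [MeasurableSpace Y]

/-- The set of pairs of points lying in different pieces of `P`. -/
def disagree (P : FinMeasPartition X) : Set (X × X) :=
  {p | ¬ ∃ i, p.1 ∈ P.piece i ∧ p.2 ∈ P.piece i}

/-- The pullback of a finite measurable partition under a measurable map. -/
def comap (P : FinMeasPartition Y) (f : X → Y) (hf : Measurable f) : FinMeasPartition X where
  card := P.card
  piece i := f ⁻¹' P.piece i
  measurable i := hf (P.measurable i)
  disjoint _ _ h := (P.disjoint h).preimage f
  cover := by rw [← preimage_iUnion, P.cover, preimage_univ]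

theorem measurableSet_disagree (P : FinMeasPartition X) : MeasurableSet P.disagree := by
  have h : P.disagree = (⋃ i, P.piece i ×ˢ P.piece i)ᶜ := by
    ext p
    simp [disagree]
  rw [h]
  exact (MeasurableSet.iUnion fun i => (P.measurable i).prod (P.measurable i)).compl

theorem exists_mem_piece (P : FinMeasPartition X) (x : X) : ∃ i, x ∈ P.piece i :=
  mem_iUnion.1 (P.cover ▸ mem_univ x)

end FinMeasPartition

section HammingDist

variable {X : Type*} [MeasurableSpace X]

theorem ofReal_codeHammingDist (T : X → X) (P : FinMeasPartition X) {n : ℕ} (hn : 0 < n) (x y : X) :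
    ENNReal.ofReal (codeHammingDist T P n x y)
      = (∑ k ∈ Finset.range n, P.disagree.indicator 1 (T^[k] x, T^[k] y)) / n := by
  classical
  rw [codeHammingDist, ENNReal.ofReal_div_of_pos (by exact_mod_cast hn), ENNReal.ofReal_natCast,
    ENNReal.ofReal_natCast, Finset.card_filter]
  push_cast
  congr 1
  exact Finset.sum_congr rfl fun k _ => by simp [indicator, FinMeasPartition.disagree]

theorem measurable_codeHammingDist {Y : Type*} [MeasurableSpace Y] {T : X → X} (hT : Measurable T)
    (P : FinMeasPartition X) {n : ℕ} (hn : 0 < n) {f g : Y → X} (hf : Measurable f)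
    (hg : Measurable g) : Measurable fun y => codeHammingDist T P n (f y) (g y) := by
  have hsum (y : Y) : codeHammingDist T P n (f y) (g y) = ((∑ k ∈ Finset.range n,
      P.disagree.indicator 1 (T^[k] (f y), T^[k] (g y))) / n : ℝ≥0∞).toReal := by
    rw [← ofReal_codeHammingDist T P hn, ENNReal.toReal_ofReal]
    exact div_nonneg (Nat.cast_nonneg _) (Nat.cast_nonneg _)
  simp only [hsum]
  refine ((Finset.measurable_fun_sum _ fun k _ => ?_).div_const _).ennreal_toReal
  exact (measurable_one.indicator P.measurableSet_disagree).comp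
    (((hT.iterate k).comp hf).prodMk ((hT.iterate k).comp hg))

theorem hammingCoverNum_le_card {μ : Measure X} [IsProbabilityMeasure μ] {T : X → X}
    {P : FinMeasPartition X} {n : ℕ} {ε m : ℝ} (hm0 : 0 ≤ m) (hmε : m < ε) (hm1 : m < 1)
    {F : Finset X} (hF : μ {y | ∀ x ∈ F, ε ≤ codeHammingDist T P n x y} ≤ ENNReal.ofReal m) :
    hammingCoverNum μ T P n ε ≤ F.card := by
  refine Nat.sInf_le ⟨F, rfl, ?_⟩
  set U := ⋃ x ∈ F, {y | codeHammingDist T P n x y < ε} with hU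
  have hUc : Uᶜ = {y | ∀ x ∈ F, ε ≤ codeHammingDist T P n x y} := by
    ext y
    simp [hU]
  calc ENNReal.ofReal (1 - ε) < ENNReal.ofReal (1 - m) :=
        (ENNReal.ofReal_lt_ofReal_iff (by linarith)).2 (by linarith)
    _ = 1 - ENNReal.ofReal m := by rw [ENNReal.ofReal_sub _ hm0, ENNReal.ofReal_one]
    _ ≤ μ U := by
      rw [tsub_le_iff_right, ← measure_univ (μ := μ), ← union_compl_self U, hUc]
      exact (measure_union_le _ _).trans (by gcongr)

end HammingDist

section Translation

variable {K : Type*} [AddCommGroup K] [TopologicalSpace K] [IsTopologicalAddGroup K]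
  [MeasurableSpace K] [BorelSpace K] (ν : Measure K) [ν.IsAddLeftInvariant]

theorem lintegral_codeHammingDist_add (ρ : K) (P : FinMeasPartition K) {n : ℕ} (hn : 0 < n)
    (g w : K) :
    ∫⁻ u, ENNReal.ofReal (codeHammingDist (· + ρ) P n (u + g) (u + w)) ∂ν
      = ν {z | (z, z + (w - g)) ∈ P.disagree} := by
  set A := {z | (z, z + (w - g)) ∈ P.disagree}
  have hA : MeasurableSet A := (measurable_id.prodMk (measurable_add_const _))
    P.measurableSet_disagree
  have hterm (k : ℕ) (u : K) : P.disagree.indicator (1 : K × K → ℝ≥0∞)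
      ((· + ρ)^[k] (u + g), (· + ρ)^[k] (u + w)) = A.indicator 1 (u + (g + k • ρ)) := by
    have hg : u + g + k • ρ = u + (g + k • ρ) := by abel
    have hw : u + w + k • ρ = u + (g + k • ρ) + (w - g) := by abel
    simp only [add_right_iterate, hg, hw]
    rfl
  have hintegral (k : ℕ) : ∫⁻ u, A.indicator (1 : K → ℝ≥0∞) (u + (g + k • ρ)) ∂ν = ν A := by
    rw [lintegral_add_right_eq_self (A.indicator 1), lintegral_indicator_one hA]
  have hmeas (k : ℕ) : Measurable fun u => A.indicator (1 : K → ℝ≥0∞) (u + (g + k • ρ)) :=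
    (measurable_one.indicator hA).comp (measurable_add_const _)
  simp only [ofReal_codeHammingDist _ P hn, hterm, div_eq_mul_inv]
  rw [lintegral_mul_const _ (Finset.measurable_fun_sum _ fun k _ => hmeas k),
    lintegral_finsetSum _ fun k _ => hmeas k]
  simp only [hintegral, Finset.sum_const, Finset.card_range, nsmul_eq_mul]
  rw [mul_right_comm, ENNReal.mul_inv_cancel (by exact_mod_cast hn.ne')
    (ENNReal.natCast_ne_top n), one_mul]

variable [CompactSpace K] [SecondCountableTopology K] [IsProbabilityMeasure ν]

theorem tendsto_measure_disagree_add (P : FinMeasPartition K) :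
    Tendsto (fun h => ν {z | (z, z + h) ∈ P.disagree}) (𝓝 0) (𝓝 0) := by
  let f : K → C(K, K) := fun h => ⟨(· + h), continuous_add_const h⟩
  have hf : Continuous f := ContinuousMap.continuous_of_continuous_uncurry _
    (continuous_snd.add continuous_fst)
  have hpiece (i : Fin P.card) :
      Tendsto (fun h => ν (symmDiff (f h ⁻¹' P.piece i) (f 0 ⁻¹' P.piece i))) (𝓝 0) (𝓝 0) :=
    tendsto_measure_symmDiff_preimage_nhds_zero (hf.tendsto 0)
      (Eventually.of_forall fun h => measurePreserving_add_right ν h)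
      (measurePreserving_add_right ν 0) (P.measurable i).nullMeasurableSet (measure_ne_top _ _)
  have hsum := tendsto_finsetSum Finset.univ fun i _ => hpiece i
  simp only [Finset.sum_const_zero] at hsum
  refine tendsto_of_tendsto_of_tendsto_of_le_of_le tendsto_const_nhds hsum (fun _ => zero_le)
    fun h => (measure_mono fun z hz => ?_).trans (measure_iUnion_fintype_le ν _)
  obtain ⟨i, hi⟩ := P.exists_mem_piece z
  refine mem_iUnion.2 ⟨i, Or.inr ⟨?_, fun hzh => hz ⟨i, hi, hzh⟩⟩⟩
  simpa [f] using hi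

theorem exists_finset_measure_codeHammingDist_add_le (P : FinMeasPartition K) {ε : ℝ} (hε : 0 < ε)
    {m : ℝ≥0∞} (hm : m ≠ 0) :
    ∃ G : Finset K, ∀ w, ∃ g ∈ G, ∀ ρ, ∀ n > 0,
      ν {u | ε ≤ codeHammingDist (· + ρ) P n (u + g) (u + w)} ≤ m := by
  classical
  have hε0 : ENNReal.ofReal ε ≠ 0 := (ENNReal.ofReal_pos.2 hε).ne'
  have hsmall := ENNReal.tendsto_nhds_zero.1 (tendsto_measure_disagree_add ν P)
    (ENNReal.ofReal ε * m) (ENNReal.mul_pos hε0 hm)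
  obtain ⟨V, hV, hVo, hV0⟩ := eventually_nhds_iff.1 hsmall
  obtain ⟨G, hG⟩ := compact_covered_by_add_left_translates (isCompact_univ (X := K))
    ⟨0, by rwa [hVo.interior_eq]⟩
  refine ⟨G.image (-·), fun w => ?_⟩
  obtain ⟨g, hg, hw⟩ := mem_iUnion₂.1 (hG (mem_univ w))
  refine ⟨-g, Finset.mem_image_of_mem _ hg, fun ρ n hn => ?_⟩
  have hmeas : Measurable fun u : K => codeHammingDist (· + ρ) P n (u + -g) (u + w) :=
    measurable_codeHammingDist (measurable_add_const ρ) P hn (measurable_add_const _)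
      (measurable_add_const _)
  have hmarkov := mul_meas_ge_le_lintegral (μ := ν) hmeas.ennreal_ofReal (ENNReal.ofReal ε)
  rw [lintegral_codeHammingDist_add ν ρ P hn] at hmarkov
  have hle := hmarkov.trans (hV _ (by simpa [add_comm] using hw))
  rw [ENNReal.mul_le_mul_iff_right hε0 ENNReal.ofReal_ne_top] at hle
  exact (measure_mono fun u hu => ENNReal.ofReal_le_ofReal hu).trans hle

/- Averaging over a random translate `u` of the net makes it possible to avoid a null set of
centres. -/
theorem exists_finset_translate_codeHammingDist_le (P : FinMeasPartition K) {ε : ℝ} (hε : 0 < ε)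
    {m : ℝ≥0∞} (hm : m ≠ 0) :
    ∃ G : Finset K, ∀ ρ, ∀ n > 0, ∀ N : Set K, ν N = 0 → ∃ u, (∀ g ∈ G, u + g ∉ N) ∧
      ν {w | ∀ g ∈ G, ε ≤ codeHammingDist (· + ρ) P n (u + g) w} ≤ m := by
  obtain ⟨G, hG⟩ := exists_finset_measure_codeHammingDist_add_le ν P hε hm
  refine ⟨G, fun ρ n hn N hN => ?_⟩
  let M : Set (K × K) := ⋂ g ∈ G,
    {p | ε ≤ codeHammingDist (· + ρ) P n (p.1 + g) (p.1 + p.2)}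
  have hM : MeasurableSet M := Finset.measurableSet_biInter G fun g _ =>
    measurableSet_le measurable_const (measurable_codeHammingDist (measurable_add_const ρ) P hn
      (measurable_fst.add_const _) (measurable_fst.add measurable_snd))
  have hMν : ν.prod ν M ≤ m := by
    have hslice (w : K) : ν ((fun u => (u, w)) ⁻¹' M) ≤ m := by
      obtain ⟨g, hg, hle⟩ := hG w
      exact (measure_mono fun u (hu : (u, w) ∈ M) => mem_iInter₂.1 hu g hg).trans (hle ρ n hn)
    rw [Measure.prod_apply_symm hM]
    calc ∫⁻ w, ν ((fun u => (u, w)) ⁻¹' M) ∂ν ≤ ∫⁻ _, m ∂ν := lintegral_mono hslice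
      _ = m := by simp
  rw [Measure.prod_apply hM] at hMν
  have hN' : ν (⋃ g ∈ G, (· + g) ⁻¹' N) = 0 := by
    refine (measure_biUnion_null_iff G.countable_toSet).2 fun g _ => ?_
    rw [measure_preimage_add_right, hN]
  obtain ⟨u, huN, hu⟩ := exists_notMem_null_le_lintegral
    (f := fun u => ν (Prod.mk u ⁻¹' M)) (measurable_measure_prodMk_left hM).aemeasurable hN'
  refine ⟨u, fun g hg hmem => huN (mem_iUnion₂.2 ⟨g, hg, hmem⟩), ?_⟩
  rw [← measure_preimage_add ν u]
  refine (measure_mono fun w hw => ?_).trans (hu.trans hMν)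
  exact mem_iInter₂.2 fun g hg => hw g hg

variable {ν} {X : Type*} [MeasurableSpace X] {μ : Measure X} [IsProbabilityMeasure μ]

theorem exists_hammingCoverNum_le_of_conj_add {T : X → X} {ρ : K} (e : X ≃ᵐ K)
    (he : MeasurePreserving e μ ν) (hconj : ∀ᵐ x ∂μ, ∀ n, e (T^[n] x) = e x + n • ρ)
    (P : FinMeasPartition X) {ε : ℝ} (hε : 0 < ε) :
    ∃ C : ℕ, ∀ n > 0, hammingCoverNum μ T P n ε ≤ C := by
  classical
  set Q := P.comap e.symm e.symm.measurable
  let A : Set X := {x | ∀ n, e (T^[n] x) = e x + n • ρ}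
  have hcode (n : ℕ) {x y : X} (hx : x ∈ A) (hy : y ∈ A) :
      codeHammingDist (· + ρ) Q n (e x) (e y) = codeHammingDist T P n x y := by
    simp only [codeHammingDist, add_right_iterate, ← hx _, ← hy _]
    simp [Q, FinMeasPartition.comap]
  obtain ⟨m, hm0, hm⟩ : ∃ m, 0 < m ∧ m < min ε 1 := exists_between (by positivity)
  obtain ⟨G, hG⟩ := exists_finset_translate_codeHammingDist_le ν Q hε (ENNReal.ofReal_pos.2 hm0).ne'
  refine ⟨G.card, fun n hn => ?_⟩
  obtain ⟨u, huA, hu⟩ := hG ρ n hn (e.symm ⁻¹' Aᶜ) (by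
    rw [(he.symm e).measure_preimage_equiv]
    exact hconj)
  refine (hammingCoverNum_le_card (F := G.image fun g => e.symm (u + g)) hm0.le
    (hm.trans_le (min_le_left _ _)) (hm.trans_le (min_le_right _ _)) ?_).trans
    Finset.card_image_le
  refine le_trans ?_ hu
  rw [← he.measure_preimage_equiv]
  refine measure_mono_ae ?_
  filter_upwards [hconj] with y hy hyF g hg
  have hle : ε ≤ codeHammingDist T P n _ y := hyF _ (Finset.mem_image_of_mem _ hg)
  rwa [← hcode n (not_not.1 (huA g hg)) hy, e.apply_symm_apply] at hle

end Translation

/-! ### The intermediate scale -/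

section IntermediateScale

variable {r : ℕ}

theorem GammaR_pow (hr : r ≠ 0) {s : ℝ} (hs : 0 ≤ s) :
    GammaR r (s ^ r) = Real.Gamma (s + 1) ^ r := by
  rw [GammaR, Real.pow_rpow_inv_natCast hs hr]

theorem strictMonoOn_Gamma_add_one_pow (hr : r ≠ 0) :
    StrictMonoOn (fun s : ℝ => Real.Gamma (s + 1) ^ r) (Ici 1) := by
  intro s hs u hu hsu
  rw [mem_Ici] at hs hu
  refine pow_lt_pow_left₀ (Real.Gamma_strictMonoOn_Ici ?_ ?_ (by linarith))
    (Real.Gamma_pos_of_pos (by linarith)).le hr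
  all_goals rw [mem_Ici]; linarith

theorem GammaRInv_Gamma_add_one_pow (hr : r ≠ 0) {s : ℝ} (hs : 1 ≤ s) :
    GammaRInv r (Real.Gamma (s + 1) ^ r) = s ^ r := by
  refine IsGreatest.csSup_eq ⟨⟨one_le_pow₀ hs, (GammaR_pow hr (by linarith)).le⟩, ?_⟩
  rintro x ⟨hx, hle⟩
  have hroot : 1 ≤ x ^ (r : ℝ)⁻¹ := Real.one_le_rpow hx (by positivity)
  rw [GammaR, (strictMonoOn_Gamma_add_one_pow hr).le_iff_le hroot hs] at hle
  rw [← Real.rpow_inv_natCast_pow (zero_le_one.trans hx) hr]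
  exact pow_le_pow_left₀ (by linarith) hle r

theorem exists_Gamma_add_one_pow_eq (hr : r ≠ 0) {y : ℝ} (hy : 1 ≤ y) :
    ∃ s, 1 ≤ s ∧ Real.Gamma (s + 1) ^ r = y := by
  obtain ⟨k, hk⟩ := exists_nat_ge (max y 1)
  rw [max_le_iff] at hk
  have hcont : ContinuousOn (fun s : ℝ => Real.Gamma (s + 1) ^ r) (Icc 1 k) := by
    refine fun s hs => ContinuousAt.continuousWithinAt (.pow ?_ r)
    have hΓ : ContinuousAt Real.Gamma (s + 1) :=
      (Real.differentiableAt_Gamma fun m => by linarith [hs.1, m.cast_nonneg (α := ℝ)]).continuousAt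
    exact hΓ.comp (f := fun s : ℝ => s + 1) (by fun_prop)
  have hle : y ≤ Real.Gamma ((k : ℝ) + 1) ^ r := by
    rw [Real.Gamma_nat_eq_factorial]
    calc y ≤ k := hk.1
      _ ≤ (k.factorial : ℝ) := by exact_mod_cast k.self_le_factorial
      _ ≤ (k.factorial : ℝ) ^ r := le_self_pow₀ (by exact_mod_cast k.factorial_pos) hr
  have hge : Real.Gamma ((1 : ℝ) + 1) ^ r ≤ y := by
    rwa [one_add_one_eq_two, Real.Gamma_two, one_pow]
  obtain ⟨s, hs, hsy⟩ := intermediate_value_Icc hk.2 hcont ⟨hge, hle⟩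
  exact ⟨s, hs.1, hsy⟩

theorem one_le_GammaRInv (hr : r ≠ 0) {y : ℝ} (hy : 1 ≤ y) : 1 ≤ GammaRInv r y := by
  obtain ⟨s, hs, rfl⟩ := exists_Gamma_add_one_pow_eq hr hy
  rw [GammaRInv_Gamma_add_one_pow hr hs]
  exact one_le_pow₀ hs

theorem monotoneOn_GammaRInv (hr : r ≠ 0) : MonotoneOn (GammaRInv r) (Ici 1) := by
  intro y hy z hz hyz
  obtain ⟨s, hs, rfl⟩ := exists_Gamma_add_one_pow_eq hr hy
  obtain ⟨u, hu, rfl⟩ := exists_Gamma_add_one_pow_eq hr hz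
  rw [GammaRInv_Gamma_add_one_pow hr hs, GammaRInv_Gamma_add_one_pow hr hu]
  have hsu := ((strictMonoOn_Gamma_add_one_pow hr).le_iff_le hs hu).1 hyz
  exact pow_le_pow_left₀ (by linarith) hsu r

theorem GammaRInv_factorial_pow (hr : r ≠ 0) {k : ℕ} (hk : 1 ≤ k) :
    GammaRInv r ((k.factorial : ℝ) ^ r) = (k : ℝ) ^ r := by
  rw [← Real.Gamma_nat_eq_factorial, GammaRInv_Gamma_add_one_pow hr (by exact_mod_cast hk)]

/-- The growth exponent of the intermediate scale: `a^{int1,r}_m(t) = q ^ (t * e(log_q m))` where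
`e(y) = y / Γ_r⁻¹(y)`. -/
def intExponent (r : ℕ) (y : ℝ) : ℝ := y / GammaRInv r y

theorem intExponent_Gamma_add_one_pow (hr : r ≠ 0) {s : ℝ} (hs : 1 ≤ s) :
    intExponent r (Real.Gamma (s + 1) ^ r) = Real.Gamma s ^ r := by
  have hs0 : s ≠ 0 := by linarith
  rw [intExponent, GammaRInv_Gamma_add_one_pow hr hs, Real.Gamma_add_one hs0, mul_pow,
    mul_div_cancel_left₀ _ (pow_ne_zero r hs0)]

theorem monotoneOn_intExponent (hr : r ≠ 0) : MonotoneOn (intExponent r) (Ici (2 ^ r)) := by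
  intro y hy z hz hyz
  have hΓ : Real.Gamma ((2 : ℝ) + 1) ^ r = 2 ^ r := by
    simpa using congrArg (· ^ r) (Real.Gamma_nat_eq_factorial 2)
  obtain ⟨s, hs, rfl⟩ := exists_Gamma_add_one_pow_eq hr ((one_le_pow₀ one_le_two).trans hy)
  obtain ⟨u, hu, rfl⟩ := exists_Gamma_add_one_pow_eq hr ((one_le_pow₀ one_le_two).trans hz)
  have hmono := strictMonoOn_Gamma_add_one_pow hr
  rw [intExponent_Gamma_add_one_pow hr hs, intExponent_Gamma_add_one_pow hr hu]
  rw [mem_Ici, ← hΓ] at hy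
  have h2s : 2 ≤ s := (hmono.le_iff_le (mem_Ici.2 one_le_two) hs).1 hy
  have hsu : s ≤ u := (hmono.le_iff_le hs hu).1 hyz
  exact pow_le_pow_left₀ (Real.Gamma_pos_of_pos (by linarith)).le
    (Real.Gamma_strictMonoOn_Ici.monotoneOn h2s (h2s.trans hsu) hsu) r

theorem intExponent_factorial_pow (hr : r ≠ 0) (k : ℕ) :
    intExponent r (((k + 1).factorial : ℝ) ^ r) = (k.factorial : ℝ) ^ r := by
  have h := intExponent_Gamma_add_one_pow hr (s := (k + 1 : ℕ)) (by norm_cast; lia)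
  rw [Real.Gamma_nat_eq_factorial] at h
  rw [h, Nat.cast_succ, Real.Gamma_nat_eq_factorial]

theorem tendsto_intExponent_atTop (hr : r ≠ 0) : Tendsto (intExponent r) atTop atTop := by
  refine tendsto_atTop.2 fun b => ?_
  obtain ⟨k, hk⟩ := exists_nat_ge (max b 1)
  rw [max_le_iff] at hk
  have h2 : 2 ≤ (k + 1).factorial :=
    Nat.factorial_le (m := 2) (Nat.succ_le_succ (by exact_mod_cast hk.2))
  filter_upwards [eventually_ge_atTop (((k + 1).factorial : ℝ) ^ r)] with y hy
  have hbase : (2 : ℝ) ^ r ≤ ((k + 1).factorial : ℝ) ^ r :=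
    pow_le_pow_left₀ zero_le_two (by exact_mod_cast h2) r
  calc b ≤ k := hk.1
    _ ≤ (k.factorial : ℝ) := by exact_mod_cast k.self_le_factorial
    _ ≤ (k.factorial : ℝ) ^ r := le_self_pow₀ (by exact_mod_cast k.factorial_pos) hr
    _ = intExponent r (((k + 1).factorial : ℝ) ^ r) := (intExponent_factorial_pow hr k).symm
    _ ≤ intExponent r y := monotoneOn_intExponent hr hbase (hbase.trans hy) hy

theorem le_intExponent (hr : r ≠ 0) {k : ℕ} {c y : ℝ} (hc : 0 ≤ c)
    (hbase : 2 ^ r ≤ ((k + 1).factorial : ℝ) ^ r - c * (k.factorial : ℝ) ^ r)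
    (hy : ((k + 1).factorial : ℝ) ^ r - c * (k.factorial : ℝ) ^ r ≤ y) :
    (1 - c / (k + 1) ^ r) * (k.factorial : ℝ) ^ r ≤ intExponent r y := by
  set z := ((k + 1).factorial : ℝ) ^ r - c * (k.factorial : ℝ) ^ r with hz
  have hz1 : 1 ≤ z := (one_le_pow₀ one_le_two).trans hbase
  have hfactorial : ((k + 1).factorial : ℝ) ^ r = (k + 1) ^ r * (k.factorial : ℝ) ^ r := by
    rw [Nat.factorial_succ, Nat.cast_mul, mul_pow, Nat.cast_succ]
  have hzle : z ≤ ((k + 1).factorial : ℝ) ^ r := sub_le_self _ (by positivity)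
  have hΓ : GammaRInv r z ≤ (k + 1) ^ r := by
    rw [← Nat.cast_succ, ← GammaRInv_factorial_pow hr (Nat.succ_pos k)]
    exact monotoneOn_GammaRInv hr hz1 (hz1.trans hzle) hzle
  calc (1 - c / (k + 1) ^ r) * (k.factorial : ℝ) ^ r = z / (k + 1) ^ r := by
        rw [hz, hfactorial]
        field_simp
    _ ≤ z / GammaRInv r z := by
        have := one_le_GammaRInv hr hz1
        gcongr
    _ ≤ intExponent r y := monotoneOn_intExponent hr hbase (hbase.trans hy) hy

variable {q : ℕ}

theorem intScale1_eq_rpow_intExponent (r : ℕ) (hq : 2 ≤ q) {m : ℕ} (hm : 0 < m) (t : ℝ) :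
    intScale1 r q m t = (q : ℝ) ^ (t * intExponent r (Real.logb q m)) := by
  have hq1 : (1 : ℝ) < q := by exact_mod_cast hq
  have hmq : (m : ℝ) = (q : ℝ) ^ Real.logb q m :=
    (Real.rpow_logb (by linarith) hq1.ne' (by exact_mod_cast hm)).symm
  rw [intScale1, Real.log_div_log]
  nth_rewrite 1 [hmq]
  rw [← Real.rpow_mul (by linarith), intExponent]
  congr 1
  ring

theorem tendsto_intScale1_atTop (hr : r ≠ 0) (hq : 2 ≤ q) {t : ℝ} (ht : 0 < t) :
    Tendsto (fun m => intScale1 r q m t) atTop atTop := by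
  have hq1 : (1 : ℝ) < q := by exact_mod_cast hq
  have hlog : Tendsto (fun m : ℕ => Real.logb q m) atTop atTop :=
    (Real.tendsto_logb_atTop hq1).comp tendsto_natCast_atTop_atTop
  have hexp := ((tendsto_intExponent_atTop hr).comp hlog).const_mul_atTop ht
  refine ((tendsto_rpow_atTop_of_base_gt_one q hq1).comp hexp).congr' ?_
  filter_upwards [eventually_gt_atTop 0] with m hm
  exact (intScale1_eq_rpow_intExponent r hq hm t).symm

theorem intScale1_pow_factorial_pow (hr : r ≠ 0) (hq : 2 ≤ q) (k : ℕ) (t : ℝ) :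
    intScale1 r q (q ^ (k + 1).factorial ^ r) t = ((q : ℝ) ^ k.factorial ^ r) ^ t := by
  have hq1 : (1 : ℝ) < q := by exact_mod_cast hq
  rw [intScale1_eq_rpow_intExponent r hq (by positivity), Nat.cast_pow, Real.logb_pow,
    Real.logb_self_eq_one hq1, mul_one, Nat.cast_pow, intExponent_factorial_pow hr, mul_comm,
    Real.rpow_mul (by linarith), ← Nat.cast_pow, Real.rpow_natCast]

end IntermediateScale

/-! ### Rotations -/

section Rotations

variable {K : Type*} [AddCommGroup K] [TopologicalSpace K] [IsTopologicalAddGroup K]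
  [MeasurableSpace K] [BorelSpace K] [CompactSpace K] [SecondCountableTopology K] [T2Space K]

theorem integral_add_right_eq_self_of_denseRange_nsmul {μ : Measure K} [IsFiniteMeasure μ] {ρ : K}
    (hρ : DenseRange fun n : ℕ => n • ρ) (hμ : MeasurePreserving (· + ρ) μ μ)
    (f : C(K, ℝ)) (h : K) : ∫ z, f (z + h) ∂μ = ∫ z, f z ∂μ := by
  have hcont : Continuous fun h => ∫ z, f (z + h) ∂μ := by
    have := continuous_parametric_integral_of_continuous (μ := μ) (s := univ)
      (f := fun h z : K => f (z + h)) (by fun_prop) isCompact_univ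
    simpa only [Measure.restrict_univ] using this
  refine congr_fun (hρ.equalizer hcont continuous_const (funext fun n => ?_)) h
  have hn : MeasurePreserving (· + n • ρ) μ μ := by
    simpa only [add_right_iterate] using hμ.iterate n
  exact hn.integral_comp (MeasurableEquiv.addRight (n • ρ)).measurableEmbedding f

theorem eq_of_measurePreserving_add_right_of_denseRange_nsmul {μ ν : Measure K}
    [IsProbabilityMeasure μ] [IsProbabilityMeasure ν] [ν.IsAddLeftInvariant] {ρ : K}
    (hρ : DenseRange fun n : ℕ => n • ρ) (hμ : MeasurePreserving (· + ρ) μ μ) : μ = ν := by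
  have hinv : μ.IsAddLeftInvariant := by
    refine ⟨fun h => ?_⟩
    have := Measure.isFiniteMeasure_map μ (h + ·)
    refine ext_of_forall_integral_eq_of_IsFiniteMeasure fun f => ?_
    rw [integral_map (by fun_prop) f.continuous.aestronglyMeasurable]
    simp only [add_comm h]
    exact integral_add_right_eq_self_of_denseRange_nsmul hρ hμ f.toContinuousMap h
  have hHaar (κ : Measure K) [IsProbabilityMeasure κ] [κ.IsAddLeftInvariant] :
      κ.IsAddHaarMeasure :=
    Measure.isAddHaarMeasure_of_isCompact_nonempty_interior κ univ isCompact_univ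
      (by rw [interior_univ]; exact univ_nonempty) (by simp) (by simp)
  have := hHaar μ
  have := hHaar ν
  exact Measure.isAddHaarMeasure_eq_of_isProbabilityMeasure μ ν

end Rotations

theorem denseRange_nsmul_coe_of_irrational {α : ℝ} (hα : Irrational α) :
    DenseRange fun n : ℕ => n • (α : Torus1) :=
  denseRange_zsmul_iff_nsmul.1 <| AddCircle.denseRange_zsmul_coe_iff.2 <| by rwa [div_one]

theorem frequently_nsmul_mem_of_denseRange {G : Type*} [AddCommGroup G] [TopologicalSpace G]
    [IsTopologicalAddGroup G] [CompactSpace G] {α : G} (hα : DenseRange fun n : ℕ => n • α)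
    {U : Set G} (hU : IsOpen U) (hne : U.Nonempty) : ∃ᶠ n : ℕ in atTop, n • α ∈ U := by
  obtain ⟨x, hx⟩ := hne
  have hcluster : MapClusterPt x atTop (fun n : ℕ => n • α) :=
    ((mapClusterPt_atTop_nsmul_tfae x α).out 0 2).2 (hα x)
  exact hcluster.frequently (hU.mem_nhds hx)

theorem exists_nsmul_eq_dist_le {n : ℕ} (hn : 0 < n) (β v : Torus1) :
    ∃ β' : Torus1, n • β' = v ∧ dist β' β ≤ 1 / n := by
  obtain ⟨s, ⟨hs0, hs1⟩, hs⟩ : v - n • β ∈ ((↑) : ℝ → Torus1) '' Ico 0 (0 + 1) := by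
    rw [AddCircle.coe_image_Ico_eq]
    trivial
  have hn' : (0 : ℝ) < n := by exact_mod_cast hn
  refine ⟨β + ((s / n : ℝ) : Torus1), ?_, ?_⟩
  · rw [nsmul_add, ← AddCircle.coe_nsmul, nsmul_eq_mul, mul_div_cancel₀ _ hn'.ne', hs,
      add_sub_cancel]
  · rw [dist_eq_norm, add_sub_cancel_left]
    calc ‖((s / n : ℝ) : Torus1)‖ ≤ |s / n| := QuotientAddGroup.norm_mk_le_norm
      _ = s / n := abs_of_nonneg (by positivity)
      _ ≤ 1 / n := by gcongr; linarith

theorem dense_setOf_exists_nsmul_mem {G : Type*} [AddCommGroup G] [TopologicalSpace G]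
    [IsTopologicalAddGroup G] [CompactSpace G] {α : G} (hα : DenseRange fun n : ℕ => n • α)
    {U : Set G} (hU : IsOpen U) (hUne : U.Nonempty) {V : Set Torus1} (hVne : V.Nonempty) :
    Dense {β : Torus1 | ∃ n : ℕ, n • α ∈ U ∧ n • β ∈ V} := by
  obtain ⟨v, hv⟩ := hVne
  refine Metric.dense_iff.2 fun β ε hε => ?_
  obtain ⟨N, hN⟩ := exists_nat_gt (1 / ε)
  obtain ⟨n, hnU, hNn⟩ := ((frequently_nsmul_mem_of_denseRange hα hU hUne).and_eventually
    (eventually_gt_atTop N)).exists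
  obtain ⟨β', hβ'v, hβ'⟩ := exists_nsmul_eq_dist_le (Nat.zero_lt_of_lt hNn) β v
  refine ⟨β', Metric.mem_ball.2 (hβ'.trans_lt ?_), n, hnU, hβ'v ▸ hv⟩
  have hn : 1 / ε < n := hN.trans (by exact_mod_cast hNn)
  exact (one_div_lt hε (lt_trans (by positivity) hn)).1 hn

theorem exists_denseRange_nsmul_prod {G : Type*} [AddCommGroup G] [TopologicalSpace G]
    [IsTopologicalAddGroup G] [CompactSpace G] [SecondCountableTopology G] {α : G}
    (hα : DenseRange fun n : ℕ => n • α) :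
    ∃ β : Torus1, DenseRange fun n : ℕ => n • (α, β) := by
  let hits (W : Set G × Set Torus1) : Set Torus1 := {β | ∃ n : ℕ, n • α ∈ W.1 ∧ n • β ∈ W.2}
  have hG := TopologicalSpace.isBasis_countableBasis G
  have hT := TopologicalSpace.isBasis_countableBasis Torus1
  obtain ⟨β, hβ⟩ := (dense_biInter_of_isOpen (f := hits)
    (S := TopologicalSpace.countableBasis G ×ˢ TopologicalSpace.countableBasis Torus1)
    (fun W hW => by
      simp only [hits, ofPred_exists, ofPred_and]
      exact isOpen_iUnion fun n => isOpen_const.inter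
        ((hT.isOpen hW.2).preimage (continuous_nsmul n)))
    ((TopologicalSpace.countable_countableBasis G).prod
      (TopologicalSpace.countable_countableBasis Torus1))
    (fun W hW => dense_setOf_exists_nsmul_mem hα (hG.isOpen hW.1)
      (TopologicalSpace.nonempty_of_mem_countableBasis hW.1)
      (TopologicalSpace.nonempty_of_mem_countableBasis hW.2))).nonempty
  refine ⟨β, (hG.prod hT).dense_iff.2 ?_⟩
  rintro _ ⟨U, hU, V, hV, rfl⟩ -
  obtain ⟨n, hnU, hnV⟩ := mem_iInter₂.1 hβ (U, V) ⟨hU, hV⟩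
  exact ⟨n • (α, β), ⟨hnU, hnV⟩, n, rfl⟩

theorem exists_finset_torus1_cover {δ : ℝ} (hδ : 0 < δ) (hδ1 : δ ≤ 1) :
    ∃ F : Finset Torus1, (F.card : ℝ) ≤ 2 / δ ∧ ∀ x, ∃ g ∈ F, ‖x - g‖ ≤ δ := by
  classical
  refine ⟨(Finset.range ⌈1 / δ⌉₊).image fun k : ℕ => ((k * δ : ℝ) : Torus1), ?_, fun x => ?_⟩
  · calc _ ≤ ((Finset.range ⌈1 / δ⌉₊).card : ℝ) := by exact_mod_cast Finset.card_image_le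
      _ ≤ 1 / δ + 1 := by
          rw [Finset.card_range]
          exact (Nat.ceil_lt_add_one (by positivity)).le
      _ ≤ 1 / δ + 1 / δ := by gcongr; exact (one_le_div hδ).2 hδ1
      _ = 2 / δ := by ring
  · obtain ⟨t, ⟨ht0, ht1⟩, rfl⟩ : ∃ t ∈ Ico (0 : ℝ) (0 + 1), (t : Torus1) = x := by
      simpa using (AddCircle.coe_image_Ico_eq (1 : ℝ) 0).ge (mem_univ x)
    have hfloor := Nat.floor_le (div_nonneg ht0 hδ.le)
    have hfloor' := Nat.lt_floor_add_one (t / δ)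
    refine ⟨_, Finset.mem_image_of_mem _ ((Finset.mem_range (m := ⌊t / δ⌋₊)).2 ?_), ?_⟩
    · rw [Nat.floor_lt (div_nonneg ht0 hδ.le)]
      exact (div_lt_div_of_pos_right (by linarith) hδ).trans_le (Nat.le_ceil _)
    · rw [← AddCircle.coe_sub]
      refine QuotientAddGroup.norm_mk_le_norm.trans ?_
      rw [le_div_iff₀ hδ] at hfloor
      rw [div_lt_iff₀ hδ] at hfloor'
      rw [Real.norm_eq_abs, abs_le]
      constructor <;> linarith

theorem le_norm_coe_torus1 {c r : ℝ} (h₁ : c ≤ |r|) (h₂ : |r| ≤ 1 - c) : c ≤ ‖(r : Torus1)‖ := by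
  rw [AddCircle.norm_eq, inv_one, one_mul, mul_one]
  rcases eq_or_ne (round r) 0 with h0 | h0
  · simpa [h0] using h₁
  · have hround : (1 : ℝ) ≤ |(round r : ℝ)| := by exact_mod_cast Int.one_le_abs h0
    have := abs_sub_abs_le_abs_sub (round r : ℝ) r
    rw [abs_sub_comm]
    linarith

/-! ### Spikes -/

theorem exists_coe_eq_and_norm_eq_abs (x : Torus1) : ∃ θ : ℝ, (θ : Torus1) = x ∧ ‖x‖ = |θ| := by
  obtain ⟨θ, hθ, rfl⟩ : x ∈ ((↑) : ℝ → Torus1) '' Ico (-(1 / 2)) (-(1 / 2) + 1) := by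
    rw [AddCircle.coe_image_Ico_eq]
    trivial
  refine ⟨θ, rfl, (AddCircle.norm_coe_eq_abs_iff 1 one_ne_zero).2 ?_⟩
  rw [abs_one]
  exact abs_le.2 ⟨hθ.1, by linarith [hθ.2]⟩

theorem mul_pow_mul_one_sub_le_one (n : ℕ) {u : ℝ} (h0 : 0 ≤ u) (h1 : u ≤ 1) :
    n * (u ^ n * (1 - u)) ≤ 1 := by
  have hsum : n * u ^ n ≤ ∑ i ∈ Finset.range n, u ^ i := by
    simpa using Finset.card_nsmul_le_sum (Finset.range n) (u ^ ·) (u ^ n) fun i hi =>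
      pow_le_pow_of_le_one h0 h1 (Finset.mem_range.1 hi).le
  calc n * (u ^ n * (1 - u)) = n * u ^ n * (1 - u) := by ring
    _ ≤ (∑ i ∈ Finset.range n, u ^ i) * (1 - u) := by gcongr
    _ = 1 - u ^ n := by linarith [geom_sum_mul u n]
    _ ≤ 1 := by linarith [pow_nonneg h0 n]

/-- The spike of height `1` and width of order `1 / a` at the integers, as a `1`-periodic function
on the line: an even power of `cos (π θ)`, so that all its derivatives have explicit bounds. -/
def spikeLift (a : ℕ) (θ : ℝ) : ℝ := Real.cos (Real.pi * θ) ^ (2 * a ^ 2)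

theorem spikeLift_eq_one_sub_pow (a : ℕ) (θ : ℝ) :
    spikeLift a θ = (1 - Real.sin (Real.pi * θ) ^ 2) ^ a ^ 2 := by
  rw [spikeLift, pow_mul, Real.cos_sq']

theorem periodic_spikeLift (a : ℕ) : Function.Periodic (spikeLift a) 1 := fun θ => by
  simp only [spikeLift_eq_one_sub_pow, mul_add, mul_one, Real.sin_add_pi, neg_sq]

theorem contDiff_spikeLift (a : ℕ) {n : WithTop ℕ∞} : ContDiff ℝ n (spikeLift a) := by
  unfold spikeLift
  fun_prop

theorem hasDerivAt_spikeLift (a : ℕ) (θ : ℝ) :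
    HasDerivAt (spikeLift a) (-(2 * Real.pi * (a ^ 2 *
      (Real.cos (Real.pi * θ) ^ (2 * a ^ 2 - 1) * Real.sin (Real.pi * θ))))) θ := by
  have hlin : HasDerivAt (fun θ : ℝ => Real.pi * θ) Real.pi θ := by
    simpa using (hasDerivAt_id θ).const_mul Real.pi
  exact (hlin.cos.pow (2 * a ^ 2)).congr_deriv (by push_cast; ring)

theorem sq_mul_abs_cos_pow_mul_sin_le (a : ℕ) (x : ℝ) :
    a ^ 2 * |Real.cos x ^ (2 * a ^ 2 - 1) * Real.sin x| ≤ a := by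
  rcases Nat.eq_zero_or_pos a with rfl | ha
  · simp
  set k := 2 * a ^ 2 - 1
  have hak : (a : ℝ) ^ 2 ≤ k := by
    have : 1 ≤ a ^ 2 := Nat.one_le_pow _ _ ha
    exact_mod_cast (by omega : a ^ 2 ≤ k)
  set w := Real.cos x ^ k * Real.sin x with hw
  have hle : k * w ^ 2 ≤ 1 := by
    rw [hw, mul_pow, pow_right_comm, Real.sin_sq]
    exact mul_pow_mul_one_sub_le_one k (sq_nonneg _) (Real.cos_sq_le_one x)
  have hsq : (a * |w|) ^ 2 ≤ 1 := by
    rw [mul_pow, sq_abs]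
    exact (mul_le_mul_of_nonneg_right hak (sq_nonneg w)).trans hle
  calc a ^ 2 * |w| = a * (a * |w|) := by ring
    _ ≤ a * 1 := by
        gcongr
        exact (sq_le_one_iff₀ (by positivity)).1 hsq
    _ = a := mul_one _

theorem abs_spikeLift_sub_le (a : ℕ) (s t : ℝ) :
    |spikeLift a s - spikeLift a t| ≤ 2 * Real.pi * a * |s - t| := by
  refine convex_univ.norm_image_sub_le_of_norm_hasDerivWithin_le (f := spikeLift a)
    (fun θ _ => (hasDerivAt_spikeLift a θ).hasDerivWithinAt) (fun θ _ => ?_) trivial trivial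
  rw [Real.norm_eq_abs, abs_neg, abs_mul, abs_of_pos Real.two_pi_pos, abs_mul,
    abs_of_nonneg (by positivity : (0 : ℝ) ≤ a ^ 2)]
  exact mul_le_mul_of_nonneg_left (sq_mul_abs_cos_pow_mul_sin_le a _) Real.two_pi_pos.le

theorem four_mul_sq_le_sin_pi_mul_sq {θ : ℝ} (hθ : |θ| ≤ 1 / 2) :
    4 * θ ^ 2 ≤ Real.sin (Real.pi * θ) ^ 2 := by
  have hpi := Real.pi_pos
  have hle := Real.mul_abs_le_abs_sin (x := Real.pi * θ) (by
    rw [abs_mul, abs_of_pos hpi]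
    nlinarith)
  rw [abs_mul, abs_of_pos hpi, ← mul_assoc, div_mul_cancel₀ _ hpi.ne'] at hle
  calc 4 * θ ^ 2 = (2 * |θ|) ^ 2 := by rw [mul_pow, sq_abs]; ring
    _ ≤ |Real.sin (Real.pi * θ)| ^ 2 := by gcongr
    _ = Real.sin (Real.pi * θ) ^ 2 := sq_abs _

theorem one_sub_pow_mul_one_add_mul_le_one (n : ℕ) {s : ℝ} (h0 : 0 ≤ s) (h1 : s ≤ 1) :
    (1 - s) ^ n * (1 + n * s) ≤ 1 := by
  have hbernoulli : 1 + n * s ≤ (1 + s) ^ n := one_add_mul_le_pow (by linarith) n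
  calc (1 - s) ^ n * (1 + n * s) ≤ (1 - s) ^ n * (1 + s) ^ n :=
        mul_le_mul_of_nonneg_left hbernoulli (pow_nonneg (by linarith) n)
    _ = (1 - s ^ 2) ^ n := by rw [← mul_pow]; ring
    _ ≤ 1 := pow_le_one₀ (by nlinarith) (by nlinarith)

theorem spikeLift_mul_le_one (a : ℕ) {θ : ℝ} (hθ : |θ| ≤ 1 / 2) :
    spikeLift a θ * (1 + 4 * a ^ 2 * θ ^ 2) ≤ 1 := by
  have hsin := four_mul_sq_le_sin_pi_mul_sq hθ
  set s := Real.sin (Real.pi * θ) ^ 2 with hs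
  have hs1 : s ≤ 1 := Real.sin_sq_le_one _
  rw [spikeLift_eq_one_sub_pow, ← hs]
  calc (1 - s) ^ a ^ 2 * (1 + 4 * a ^ 2 * θ ^ 2) ≤ (1 - s) ^ a ^ 2 * (1 + (a ^ 2 : ℕ) * s) := by
        push_cast
        refine mul_le_mul_of_nonneg_left ?_ (pow_nonneg (by linarith) _)
        nlinarith [sq_nonneg (a : ℝ)]
    _ ≤ 1 := one_sub_pow_mul_one_add_mul_le_one _ (sq_nonneg _) hs1

/-- The spike of height `1` and width of order `1 / a` at the origin of the circle. -/
def spike (a : ℕ) : Torus1 → ℝ := (periodic_spikeLift a).lift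

theorem spike_coe (a : ℕ) (θ : ℝ) : spike a (θ : Torus1) = spikeLift a θ :=
  Function.Periodic.lift_coe _ _

theorem spike_zero (a : ℕ) : spike a 0 = 1 := by
  rw [← AddCircle.coe_zero, spike_coe]
  simp [spikeLift]

theorem continuous_spike (a : ℕ) : Continuous (spike a) :=
  continuous_coinduced_dom.2 (contDiff_spikeLift a (n := 0)).continuous

theorem spike_nonneg (a : ℕ) (x : Torus1) : 0 ≤ spike a x := by
  obtain ⟨θ, rfl, -⟩ := exists_coe_eq_and_norm_eq_abs x
  rw [spike_coe, spikeLift, pow_mul]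
  positivity

theorem spike_le_one (a : ℕ) (x : Torus1) : spike a x ≤ 1 := by
  obtain ⟨θ, rfl, -⟩ := exists_coe_eq_and_norm_eq_abs x
  rw [spike_coe, spikeLift, pow_mul]
  exact pow_le_one₀ (sq_nonneg _) (Real.cos_sq_le_one _)

theorem abs_spike_sub_le (a : ℕ) (x y : Torus1) :
    |spike a x - spike a y| ≤ 2 * Real.pi * a * ‖x - y‖ := by
  obtain ⟨s, hs, hnorm⟩ := exists_coe_eq_and_norm_eq_abs (x - y)
  obtain ⟨t, rfl, -⟩ := exists_coe_eq_and_norm_eq_abs y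
  obtain rfl : ((s + t : ℝ) : Torus1) = x := by rw [AddCircle.coe_add, hs, sub_add_cancel]
  rw [hnorm, spike_coe, spike_coe]
  simpa using abs_spikeLift_sub_le a (s + t) t

theorem spike_mul_le_one (a : ℕ) (x : Torus1) : spike a x * (1 + 4 * a ^ 2 * ‖x‖ ^ 2) ≤ 1 := by
  have hhalf := AddCircle.norm_le_half_period (1 : ℝ) (x := x) one_ne_zero
  obtain ⟨θ, rfl, hnorm⟩ := exists_coe_eq_and_norm_eq_abs x
  rw [hnorm, abs_one] at hhalf
  rw [spike_coe, hnorm, sq_abs]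
  exact spikeLift_mul_le_one a hhalf

theorem spike_le_of_three_le {a : ℕ} {x : Torus1} (h : 3 ≤ a * ‖x‖) : spike a x ≤ 1 / 37 := by
  nlinarith [spike_mul_le_one a x, mul_nonneg (spike_nonneg a x) (sub_nonneg.2 h)]

theorem le_spike_of_le {a : ℕ} {x : Torus1} (h : a * ‖x‖ ≤ 1 / 1000) : 99 / 100 ≤ spike a x := by
  have hsub := (le_abs_self _).trans (abs_spike_sub_le a 0 x)
  rw [spike_zero, zero_sub, norm_neg] at hsub
  nlinarith [Real.pi_lt_d2, Real.pi_pos]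

theorem integral_spike_le {a : ℕ} (ha : 0 < a) : ∫ x, spike a x ≤ 2 / a := by
  have ha' : (0 : ℝ) < 2 * a := by positivity
  have hinv : Continuous fun θ : ℝ => (1 + (2 * a * θ) ^ 2)⁻¹ :=
    Continuous.inv₀ (by fun_prop) fun θ => by positivity
  calc ∫ x, spike a x = ∫ θ in (-(1 / 2))..(-(1 / 2) + 1), spikeLift a θ := by
        rw [← AddCircle.intervalIntegral_preimage 1 (-(1 / 2)) (spike a)]
        simp_rw [spike_coe]
    _ ≤ ∫ θ in (-(1 / 2))..(-(1 / 2) + 1), (1 + (2 * a * θ) ^ 2)⁻¹ := by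
        refine intervalIntegral.integral_mono_on (by norm_num)
          ((contDiff_spikeLift a (n := 0)).continuous.intervalIntegrable _ _)
          (hinv.intervalIntegrable _ _) fun θ hθ => ?_
        have hhalf : |θ| ≤ 1 / 2 := abs_le.2 ⟨hθ.1, by linarith [hθ.2]⟩
        rw [← one_div, le_div_iff₀ (by positivity)]
        linarith [spikeLift_mul_le_one a hhalf, mul_pow (2 * a : ℝ) θ 2]
    _ = (2 * a : ℝ)⁻¹ * (Real.arctan a - Real.arctan (-a)) := by
        rw [intervalIntegral.integral_comp_mul_left (fun θ => (1 + θ ^ 2)⁻¹) ha'.ne',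
          integral_inv_one_add_sq, smul_eq_mul]
        ring_nf
    _ ≤ (2 * a : ℝ)⁻¹ * 4 := by
        gcongr
        linarith [Real.arctan_lt_pi_div_two a, Real.neg_pi_div_two_lt_arctan (-a), Real.pi_le_four]
    _ = 2 / a := by field_simp; norm_num

theorem lintegral_ofReal_spike_le {a : ℕ} (ha : 0 < a) :
    ∫⁻ x, ENNReal.ofReal (spike a x) ≤ ENNReal.ofReal (2 / a) := by
  rw [← ofReal_integral_eq_lintegral_ofReal
    ((continuous_spike a).integrable_of_hasCompactSupport (.of_compactSpace _))
    (.of_forall (spike_nonneg a))]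
  exact ENNReal.ofReal_le_ofReal (integral_spike_le ha)

theorem norm_iteratedFDeriv_pow_le {E : Type*} [NormedAddCommGroup E] [NormedSpace ℝ E]
    {f : E → ℝ} (hf : ContDiff ℝ ⊤ f) {b : ℝ} (hb : ∀ i x, ‖iteratedFDeriv ℝ i f x‖ ≤ b ^ i)
    (m i : ℕ) (x : E) : ‖iteratedFDeriv ℝ i (fun y => f y ^ m) x‖ ≤ (m * b) ^ i := by
  have hb0 : 0 ≤ b := by simpa using (norm_nonneg _).trans (hb 1 x)
  induction m generalizing i with
  | zero =>
    rcases i with _ | i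
    · simp
    · simp [iteratedFDeriv_const_of_ne]
  | succ m ih =>
    simp only [pow_succ]
    calc ‖iteratedFDeriv ℝ i (fun y => f y ^ m * f y) x‖
        ≤ ∑ k ∈ Finset.range (i + 1), i.choose k * ‖iteratedFDeriv ℝ k (fun y => f y ^ m) x‖ *
          ‖iteratedFDeriv ℝ (i - k) f x‖ := norm_iteratedFDeriv_mul_le (hf.pow m) hf x le_top
      _ ≤ ∑ k ∈ Finset.range (i + 1), i.choose k * (m * b) ^ k * b ^ (i - k) := by
          gcongr with k
          · exact ih k
          · exact hb (i - k) x
      _ = (m * b + b) ^ i := by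
          rw [add_pow]
          exact Finset.sum_congr rfl fun k _ => by ring
      _ = ((m + 1 : ℕ) * b) ^ i := by push_cast; ring

theorem abs_iteratedDeriv_spikeLift_le (a i : ℕ) (θ : ℝ) :
    |iteratedDeriv i (spikeLift a) θ| ≤ (2 * Real.pi * a ^ 2) ^ i := by
  have hcos (i : ℕ) (θ : ℝ) :
      ‖iteratedFDeriv ℝ i (fun θ => Real.cos (Real.pi * θ)) θ‖ ≤ Real.pi ^ i := by
    rw [norm_iteratedFDeriv_eq_norm_iteratedDeriv, iteratedDeriv_comp_const_mul Real.contDiff_cos,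
      Real.norm_eq_abs, abs_mul, abs_pow, abs_of_pos Real.pi_pos]
    exact mul_le_of_le_one_right (by positivity) (Real.abs_iteratedDeriv_cos_le_one i _)
  have hpow := norm_iteratedFDeriv_pow_le (by fun_prop) hcos (2 * a ^ 2) i θ
  rw [norm_iteratedFDeriv_eq_norm_iteratedDeriv] at hpow
  refine hpow.trans_eq ?_
  push_cast
  ring

theorem abs_iteratedDeriv_spikeLift_sub_le (a i : ℕ) (s t : ℝ) :
    |iteratedDeriv i (spikeLift a) s - iteratedDeriv i (spikeLift a) t| ≤
      (2 * Real.pi * a ^ 2) ^ (i + 1) * |s - t| := by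
  refine convex_univ.norm_image_sub_le_of_norm_deriv_le (f := iteratedDeriv i (spikeLift a))
    (fun θ _ => (contDiff_spikeLift a (n := ⊤)).differentiable_iteratedDeriv i
      (WithTop.coe_lt_top _) θ) (fun θ _ => ?_) trivial trivial
  rw [← iteratedDeriv_succ]
  exact abs_iteratedDeriv_spikeLift_le a (i + 1) θ

/-! ### Skew products over circle rotations -/

instance : IsProbabilityMeasure (volume : Measure Torus1) := ⟨by simp⟩

instance : IsProbabilityMeasure (volume : Measure Torus2) := by
  rw [Measure.volume_eq_prod]
  infer_instance

instance : (volume : Measure Torus2).IsAddLeftInvariant := by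
  rw [Measure.volume_eq_prod]
  infer_instance

/-- The skew product over the circle rotation by `α` with fibre rotations `β + φ x`. -/
def skewRotation (α β : Torus1) (φ : Torus1 → ℝ) (z : Torus2) : Torus2 :=
  (z.1 + α, z.2 + β + (φ z.1 : Torus1))

theorem rightInverse_skewRotation (α β : Torus1) (φ : Torus1 → ℝ) :
    Function.RightInverse (skewRotation (-α) (-β) fun x => -φ (x - α)) (skewRotation α β φ) := by
  intro z
  ext
  · simp only [skewRotation, neg_add_cancel_right]
  · simp only [skewRotation, AddCircle.coe_neg, ← sub_eq_add_neg]
    abel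

theorem leftInverse_skewRotation (α β : Torus1) (φ : Torus1 → ℝ) :
    Function.LeftInverse (skewRotation (-α) (-β) fun x => -φ (x - α)) (skewRotation α β φ) := by
  intro z
  ext
  · simp only [skewRotation, add_neg_cancel_right]
  · simp only [skewRotation, AddCircle.coe_neg, add_sub_cancel_right]
    abel

theorem exists_contDiff_isLiftOf_skewRotation {k : ℕ∞} {φ : Torus1 → ℝ}
    (hφ : ContDiff ℝ k fun x : ℝ => φ x) (α β : Torus1) :
    ∃ F : ℝ × ℝ → ℝ × ℝ, ContDiff ℝ k F ∧ IsLiftOf F (skewRotation α β φ) := by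
  obtain ⟨a, rfl⟩ := QuotientAddGroup.mk_surjective α
  obtain ⟨b, rfl⟩ := QuotientAddGroup.mk_surjective β
  have hφ' : ContDiff ℝ k fun z : ℝ × ℝ => φ z.1 := hφ.comp contDiff_fst
  exact ⟨fun z => (z.1 + a, z.2 + b + φ z.1),
    (contDiff_fst.add contDiff_const).prodMk ((contDiff_snd.add contDiff_const).add hφ'),
    fun z => rfl⟩

theorem isCkTorusDiffeo_skewRotation {k : ℕ∞} {φ : Torus1 → ℝ}
    (hφ : ContDiff ℝ k fun x : ℝ => φ x) (α β : Torus1) :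
    IsCkTorusDiffeo k (skewRotation α β φ) := by
  have hleft := leftInverse_skewRotation α β φ
  have hright := rightInverse_skewRotation α β φ
  refine ⟨⟨hleft.injective, hright.surjective⟩, exists_contDiff_isLiftOf_skewRotation hφ α β, ?_⟩
  have hinv : Function.invFun (skewRotation α β φ) =
      skewRotation (-α) (-β) fun x => -φ (x - α) :=
    funext fun z => hleft.injective <| by
      rw [hright z]
      exact Function.invFun_eq ⟨_, hright z⟩
  rw [hinv]
  refine exists_contDiff_isLiftOf_skewRotation ?_ _ _
  obtain ⟨a, rfl⟩ := QuotientAddGroup.mk_surjective α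
  exact (hφ.comp (contDiff_id.sub (contDiff_const (c := a)))).neg

theorem skewRotation_iterate (α β : Torus1) (φ : Torus1 → ℝ) (n : ℕ) (z : Torus2) :
    (skewRotation α β φ)^[n] z =
      (z.1 + n • α, z.2 + n • β + ((∑ i ∈ Finset.range n, φ (z.1 + i • α) : ℝ) : Torus1)) := by
  induction n with
  | zero => simp
  | succ n ih =>
    rw [Function.iterate_succ_apply', ih, Finset.sum_range_succ, AddCircle.coe_add, skewRotation,
      succ_nsmul, succ_nsmul]
    ext
    · simp only [add_assoc]
    · simp only
      abel

theorem continuous_coe_torus1 : Continuous ((↑) : ℝ → Torus1) := AddCircle.continuous_mk' 1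

theorem measurePreserving_skewRotation (α β : Torus1) {φ : Torus1 → ℝ} (hφ : Measurable φ) :
    MeasurePreserving (skewRotation α β φ) := by
  have := continuous_coe_torus1.measurable.comp hφ
  refine (measurePreserving_add_right volume α).skew_product
    (g := fun x y => y + β + (φ x : Torus1)) (by fun_prop) (.of_forall fun x => ?_)
  simp only [add_assoc]
  exact (measurePreserving_add_right volume _).map_eq

/-- The shear `(x, y) ↦ (x, y - Ψ x)`. It conjugates the skew product with cocycle
`Ψ (x + α) - Ψ x` to a translation. -/
def shear {Ψ : Torus1 → ℝ} (hΨ : Measurable Ψ) : Torus2 ≃ᵐ Torus2 where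
  toFun := skewRotation 0 0 fun x => -Ψ x
  invFun := skewRotation 0 0 Ψ
  left_inv z := by simp [skewRotation]
  right_inv z := by simp [skewRotation]
  measurable_toFun := (measurePreserving_skewRotation 0 0 hΨ.neg).measurable
  measurable_invFun := (measurePreserving_skewRotation 0 0 hΨ).measurable

theorem shear_apply {Ψ : Torus1 → ℝ} (hΨ : Measurable Ψ) (z : Torus2) :
    shear hΨ z = (z.1, z.2 - (Ψ z.1 : Torus1)) := by
  simp [shear, skewRotation, sub_eq_add_neg]

theorem measurePreserving_shear {Ψ : Torus1 → ℝ} (hΨ : Measurable Ψ) :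
    MeasurePreserving (shear hΨ) :=
  measurePreserving_skewRotation 0 0 hΨ.neg

theorem shear_skewRotation {α β : Torus1} {φ Ψ : Torus1 → ℝ} (hΨ : Measurable Ψ) {z : Torus2}
    (hz : φ z.1 = Ψ (z.1 + α) - Ψ z.1) :
    shear hΨ (skewRotation α β φ z) = shear hΨ z + (α, β) := by
  rw [shear_apply, shear_apply, skewRotation, hz, AddCircle.coe_sub]
  ext
  · rfl
  · simp only [Prod.snd_add]
    abel

theorem uniquelyErgodicWithVolume_skewRotation {α β : Torus1} {φ Ψ : Torus1 → ℝ}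
    (hφ : Measurable φ) (hΨ : Measurable Ψ) (hdense : DenseRange fun n : ℕ => n • (α, β))
    (hcob : ∀ᵐ x, φ x = Ψ (x + α) - Ψ x) :
    UniquelyErgodicWithVolume (skewRotation α β φ) := by
  refine ⟨measurePreserving_skewRotation α β hφ, fun μ _ hμ => ?_⟩
  have hmarginal : μ.map Prod.fst = volume := by
    have := Measure.isProbabilityMeasure_map (μ := μ) measurable_fst.aemeasurable
    refine eq_of_measurePreserving_add_right_of_denseRange_nsmul (ρ := α) ?_ ?_
    · exact Prod.fst_surjective.denseRange.comp hdense continuous_fst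
    · exact (measurable_fst.measurePreserving μ).of_semiconj hμ (fun _ => rfl) (by fun_prop)
  have hcobμ : ∀ᵐ z ∂μ, φ z.1 = Ψ (z.1 + α) - Ψ z.1 := by
    rw [← hmarginal] at hcob
    exact ae_of_ae_map measurable_fst.aemeasurable hcob
  have himage : μ.map (shear hΨ) = volume := by
    have := Measure.isProbabilityMeasure_map (μ := μ) (shear hΨ).measurable.aemeasurable
    refine eq_of_measurePreserving_add_right_of_denseRange_nsmul hdense ⟨by fun_prop, ?_⟩
    rw [Measure.map_map (by fun_prop) (shear hΨ).measurable]
    calc μ.map ((· + (α, β)) ∘ shear hΨ) = μ.map (shear hΨ ∘ skewRotation α β φ) :=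
          Measure.map_congr (hcobμ.mono fun z hz => (shear_skewRotation hΨ hz).symm)
      _ = μ.map (shear hΨ) := by
          rw [← Measure.map_map (shear hΨ).measurable hμ.measurable, hμ.map_eq]
  refine (shear hΨ).map_measurableEquiv_injective (himage.trans ?_)
  exact (measurePreserving_shear hΨ).map_eq.symm

theorem ae_shear_skewRotation_iterate {α β : Torus1} {φ Ψ : Torus1 → ℝ} (hΨ : Measurable Ψ)
    (hφ : Measurable φ) (hcob : ∀ᵐ x, φ x = Ψ (x + α) - Ψ x) :
    ∀ᵐ z, ∀ n, shear hΨ ((skewRotation α β φ)^[n] z) = shear hΨ z + n • (α, β) := by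
  have hT := measurePreserving_skewRotation α β hφ
  have hcob' : ∀ᵐ z : Torus2, φ z.1 = Ψ (z.1 + α) - Ψ z.1 :=
    Measure.quasiMeasurePreserving_fst.ae hcob
  have horbit : ∀ᵐ z : Torus2, ∀ n, shear hΨ (skewRotation α β φ ((skewRotation α β φ)^[n] z)) =
      shear hΨ ((skewRotation α β φ)^[n] z) + (α, β) :=
    ae_all_iff.2 fun n => (hT.iterate n).quasiMeasurePreserving.ae
      (hcob'.mono fun z hz => shear_skewRotation hΨ hz)
  filter_upwards [horbit] with z hz n
  induction n with
  | zero => simp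
  | succ n ih => rw [Function.iterate_succ_apply', hz, ih, succ_nsmul, add_assoc]

theorem exists_hammingCoverNum_skewRotation_le {α β : Torus1} {φ Ψ : Torus1 → ℝ}
    (hφ : Measurable φ) (hΨ : Measurable Ψ) (hcob : ∀ᵐ x, φ x = Ψ (x + α) - Ψ x)
    (P : FinMeasPartition Torus2) {ε : ℝ} (hε : 0 < ε) :
    ∃ C : ℕ, ∀ n > 0, hammingCoverNum volume (skewRotation α β φ) P n ε ≤ C :=
  exists_hammingCoverNum_le_of_conj_add (shear hΨ) (measurePreserving_shear hΨ)
    (ae_shear_skewRotation_iterate hΨ hφ hcob) P hε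

/-! ### Scales of the construction -/

theorem le_mul_half_pow_of_succ_le_half {u : ℕ → ℝ} (h : ∀ l, u (l + 1) ≤ u l / 2) (J l : ℕ) :
    u (l + J) ≤ u J * (1 / 2) ^ l := by
  induction l with
  | zero => simp
  | succ l ih =>
    rw [add_right_comm, pow_succ]
    linarith [h (l + J)]

theorem summable_nat_add_of_succ_le_half {u : ℕ → ℝ} (h0 : ∀ l, 0 ≤ u l)
    (h : ∀ l, u (l + 1) ≤ u l / 2) (J : ℕ) : Summable fun l => u (l + J) :=
  Summable.of_nonneg_of_le (fun l => h0 (l + J)) (le_mul_half_pow_of_succ_le_half h J)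
    (summable_geometric_two.mul_left (u J))

theorem tsum_nat_add_le_of_succ_le_half {u : ℕ → ℝ} (h0 : ∀ l, 0 ≤ u l)
    (h : ∀ l, u (l + 1) ≤ u l / 2) (J : ℕ) : ∑' l, u (l + J) ≤ 2 * u J := by
  calc ∑' l, u (l + J) ≤ ∑' l : ℕ, u J * (1 / 2 : ℝ) ^ l :=
        (summable_nat_add_of_succ_le_half h0 h J).tsum_le_tsum
          (le_mul_half_pow_of_succ_le_half h J) (summable_geometric_two.mul_left (u J))
    _ = 2 * u J := by rw [tsum_mul_left, tsum_geometric_two, mul_comm]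

/-- Parameters of the construction: the `j`-th spike function has period `1 / p j` and its spikes
have width of order `1 / (p j * a j)`. The exponent `j + 12` grows with `j` so that all derivatives
of the cocycle converge. -/
structure SpikeScales where
  p : ℕ → ℕ
  a : ℕ → ℕ
  p_dvd_succ : ∀ j, p j ∣ p (j + 1)
  million_le_p_zero : 10 ^ 6 ≤ p 0
  p_le_a : ∀ j, p j ≤ a j
  a_pow_le_p_succ : ∀ j, a j ^ (j + 12) ≤ p (j + 1)

namespace SpikeScales

variable (s : SpikeScales)

/-- The order of magnitude of the Lipschitz constant of the `j`-th spike function. -/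
def slope (j : ℕ) : ℝ := s.p j * s.a j

/-- The order of magnitude of the change of the `j`-th spike function under one rotation step. -/
def drift (j : ℕ) : ℝ := s.slope j / s.p (j + 1)

/-- The rotation number of the first coordinate. -/
def angle : ℝ := ∑' l, 1 / (s.p l : ℝ)

/-- The fractional part of `p j * angle`. -/
def angleFrac (j : ℕ) : ℝ := s.p j * ∑' l, 1 / (s.p (l + (j + 1)) : ℝ)

theorem million_le_p (j : ℕ) : 10 ^ 6 ≤ s.p j := by
  induction j with
  | zero => exact s.million_le_p_zero
  | succ j ih =>
    calc 10 ^ 6 ≤ s.a j := ih.trans (s.p_le_a j)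
      _ ≤ s.a j ^ (j + 12) := Nat.le_self_pow (by omega) _
      _ ≤ s.p (j + 1) := s.a_pow_le_p_succ j

theorem million_le_p_cast (j : ℕ) : (10 ^ 6 : ℝ) ≤ s.p j := by exact_mod_cast s.million_le_p j

theorem p_pos (j : ℕ) : 0 < s.p j := by linarith [s.million_le_p j]

theorem p_cast_pos (j : ℕ) : (0 : ℝ) < s.p j := by exact_mod_cast s.p_pos j

theorem p_le_a_cast (j : ℕ) : (s.p j : ℝ) ≤ s.a j := by exact_mod_cast s.p_le_a j

theorem a_pos (j : ℕ) : 0 < s.a j := (s.p_pos j).trans_le (s.p_le_a j)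

theorem million_le_a_cast (j : ℕ) : (10 ^ 6 : ℝ) ≤ s.a j :=
  (s.million_le_p_cast j).trans (s.p_le_a_cast j)

theorem a_pow_le_p_succ_of_le {j k : ℕ} (hk : k ≤ j + 12) : (s.a j : ℝ) ^ k ≤ s.p (j + 1) := by
  exact_mod_cast (Nat.pow_le_pow_right (s.a_pos j) hk).trans (s.a_pow_le_p_succ j)

theorem slope_le_a_sq (j : ℕ) : s.slope j ≤ s.a j ^ 2 := by
  rw [slope, sq]
  exact mul_le_mul_of_nonneg_right (s.p_le_a_cast j) (Nat.cast_nonneg _)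

theorem a_le_slope (j : ℕ) : s.a j ≤ s.slope j :=
  le_mul_of_one_le_left (Nat.cast_nonneg _) (by linarith [s.million_le_p_cast j])

theorem million_le_slope (j : ℕ) : 10 ^ 6 ≤ s.slope j :=
  (s.million_le_a_cast j).trans (s.a_le_slope j)

theorem slope_pos (j : ℕ) : 0 < s.slope j := by linarith [s.million_le_slope j]

theorem p_le_slope (j : ℕ) : s.p j ≤ s.slope j := (s.p_le_a_cast j).trans (s.a_le_slope j)

theorem slope_pow_six_le (j : ℕ) : s.slope j ^ 6 ≤ s.p (j + 1) :=
  calc s.slope j ^ 6 ≤ (s.a j ^ 2 : ℝ) ^ 6 :=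
        pow_le_pow_left₀ (s.slope_pos j).le (s.slope_le_a_sq j) 6
    _ = (s.a j : ℝ) ^ 12 := by ring
    _ ≤ s.p (j + 1) := s.a_pow_le_p_succ_of_le (by omega)

theorem million_mul_slope_le (j : ℕ) : 10 ^ 6 * s.slope j ≤ s.p (j + 1) := by
  have h1 : 1 ≤ s.slope j := by linarith [s.million_le_slope j]
  calc 10 ^ 6 * s.slope j ≤ s.slope j * s.slope j :=
        mul_le_mul_of_nonneg_right (s.million_le_slope j) (s.slope_pos j).le
    _ = s.slope j ^ 2 := (sq _).symm
    _ ≤ s.slope j ^ 6 := pow_le_pow_right₀ h1 (by norm_num)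
    _ ≤ s.p (j + 1) := s.slope_pow_six_le j

theorem sum_slope_succ_le (J : ℕ) : ∑ j ∈ Finset.range (J + 1), s.slope j ≤ 2 * s.slope J := by
  induction J with
  | zero => simpa using by linarith [s.slope_pos 0]
  | succ J ih =>
    rw [Finset.sum_range_succ]
    linarith [s.million_mul_slope_le J, s.p_le_slope (J + 1), s.slope_pos J]

theorem mul_sum_slope_le (J : ℕ) : 10 ^ 5 * ∑ j ∈ Finset.range J, s.slope j ≤ s.p J := by
  cases J with
  | zero => simp
  | succ J => linarith [s.million_mul_slope_le J, s.sum_slope_succ_le J, s.slope_pos J]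

theorem two_mul_p_le (j : ℕ) : 2 * s.p j ≤ (s.p (j + 1) : ℝ) := by
  linarith [s.million_mul_slope_le j, s.p_le_slope j, s.slope_pos j]

theorem two_pow_le_p (j : ℕ) : (2 : ℝ) ^ j ≤ s.p j := by
  induction j with
  | zero => linarith [s.million_le_p_cast 0, pow_zero (2 : ℝ)]
  | succ j ih => linarith [s.two_mul_p_le j, pow_succ (2 : ℝ) j]

theorem one_div_p_succ_le (j : ℕ) : 1 / (s.p (j + 1) : ℝ) ≤ 1 / s.p j / 2 := by
  rw [div_div, mul_comm]
  exact one_div_le_one_div_of_le (by linarith [s.p_cast_pos j]) (s.two_mul_p_le j)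

theorem summable_one_div_p (J : ℕ) : Summable fun l => 1 / (s.p (l + J) : ℝ) :=
  summable_nat_add_of_succ_le_half (u := fun l => 1 / (s.p l : ℝ)) (fun _ => by positivity)
    s.one_div_p_succ_le J

theorem angleFrac_le (j : ℕ) : s.angleFrac j ≤ 2 * s.p j / s.p (j + 1) :=
  calc s.angleFrac j ≤ s.p j * (2 * (1 / s.p (j + 1))) :=
        mul_le_mul_of_nonneg_left
          (tsum_nat_add_le_of_succ_le_half (u := fun l => 1 / (s.p l : ℝ))
            (fun _ => by positivity) s.one_div_p_succ_le (j + 1))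
          (Nat.cast_nonneg _)
    _ = 2 * s.p j / s.p (j + 1) := by ring

theorem le_angleFrac (j : ℕ) : s.p j / s.p (j + 1) ≤ s.angleFrac j := by
  rw [div_eq_mul_one_div]
  refine mul_le_mul_of_nonneg_left ?_ (Nat.cast_nonneg _)
  simpa using (s.summable_one_div_p (j + 1)).le_tsum 0 fun _ _ => by positivity

theorem angleFrac_pos (j : ℕ) : 0 < s.angleFrac j :=
  (div_pos (s.p_cast_pos j) (s.p_cast_pos (j + 1))).trans_le (s.le_angleFrac j)

theorem a_mul_angleFrac_le (j : ℕ) : s.a j * s.angleFrac j ≤ 2 * s.drift j :=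
  calc s.a j * s.angleFrac j ≤ s.a j * (2 * s.p j / s.p (j + 1)) :=
        mul_le_mul_of_nonneg_left (s.angleFrac_le j) (Nat.cast_nonneg _)
    _ = 2 * s.drift j := by unfold drift slope; ring

theorem drift_pos (j : ℕ) : 0 < s.drift j := div_pos (s.slope_pos j) (s.p_cast_pos (j + 1))

theorem drift_mul_slope_pow_le (j : ℕ) : s.drift j * s.slope j ^ 5 ≤ 1 := by
  rw [drift, div_mul_eq_mul_div, div_le_one (s.p_cast_pos _), ← pow_succ']
  exact s.slope_pow_six_le j

theorem drift_mul_slope_le (j : ℕ) : s.drift j * s.slope j ≤ 1 :=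
  (mul_le_mul_of_nonneg_left (le_self_pow₀ (by linarith [s.million_le_slope j]) (by norm_num))
    (s.drift_pos j).le).trans (s.drift_mul_slope_pow_le j)

theorem drift_le_one_div_million (j : ℕ) : s.drift j ≤ 1 / 10 ^ 6 := by
  rw [drift, div_le_div_iff₀ (s.p_cast_pos _) (by norm_num)]
  linarith [s.million_mul_slope_le j]

theorem drift_succ_le (j : ℕ) : s.drift (j + 1) ≤ s.drift j / 2 :=
  calc s.drift (j + 1) ≤ 1 / s.slope (j + 1) :=
        (le_div_iff₀ (s.slope_pos _)).2 (s.drift_mul_slope_le (j + 1))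
    _ ≤ 1 / s.p (j + 1) := one_div_le_one_div_of_le (s.p_cast_pos _) (s.p_le_slope (j + 1))
    _ ≤ s.slope j / 2 / s.p (j + 1) := by
        gcongr
        linarith [s.million_le_slope j]
    _ = s.drift j / 2 := by unfold drift; ring

theorem summable_drift (J : ℕ) : Summable fun l => s.drift (l + J) :=
  summable_nat_add_of_succ_le_half (fun l => (s.drift_pos l).le) s.drift_succ_le J

theorem tsum_drift_le (J : ℕ) : ∑' l, s.drift (l + J) ≤ 2 * s.drift J :=
  tsum_nat_add_le_of_succ_le_half (fun l => (s.drift_pos l).le) s.drift_succ_le J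

theorem p_dvd_of_le {l j : ℕ} (h : l ≤ j) : s.p l ∣ s.p j :=
  Nat.le_induction dvd_rfl (fun k _ ih => ih.trans (s.p_dvd_succ k)) j h

theorem exists_p_mul_angle_eq (j : ℕ) : ∃ N : ℤ, s.p j * s.angle = N + s.angleFrac j := by
  refine ⟨∑ l ∈ Finset.range (j + 1), ((s.p j / s.p l : ℕ) : ℤ), ?_⟩
  have hsum : Summable fun l => 1 / (s.p l : ℝ) := s.summable_one_div_p 0
  rw [angle, angleFrac, ← hsum.sum_add_tsum_nat_add (j + 1), mul_add]
  congr 1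
  rw [Int.cast_sum, Finset.mul_sum]
  refine Finset.sum_congr rfl fun l hl => ?_
  rw [Int.cast_natCast, Nat.cast_div (s.p_dvd_of_le (Nat.lt_succ_iff.1 (Finset.mem_range.1 hl)))
    (s.p_cast_pos l).ne', mul_one_div]

theorem p_nsmul_angle (j : ℕ) : s.p j • (s.angle : Torus1) = (s.angleFrac j : Torus1) := by
  obtain ⟨N, hN⟩ := s.exists_p_mul_angle_eq j
  have hN0 : ((N : ℝ) : Torus1) = 0 := (AddCircle.coe_eq_zero_iff _).2 ⟨N, by simp⟩
  rw [← AddCircle.coe_nsmul, nsmul_eq_mul, hN, AddCircle.coe_add, hN0, zero_add]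

theorem p_nsmul_nsmul_angle (n j : ℕ) :
    s.p j • n • (s.angle : Torus1) = ((n * s.angleFrac j : ℝ) : Torus1) := by
  rw [smul_comm, p_nsmul_angle, ← AddCircle.coe_nsmul, nsmul_eq_mul]

/-- If `b * angle` were an integer then `b * angleFrac j` would be a positive integer for every
`j`, but it is small as soon as `b ≤ a j`. -/
theorem irrational_angle : Irrational s.angle := by
  rintro ⟨r, hr⟩
  obtain ⟨j, hj⟩ : ∃ j : ℕ, (r.den : ℝ) < 2 ^ j := pow_unbounded_of_one_lt _ (by norm_num)
  obtain ⟨N, hN⟩ := s.exists_p_mul_angle_eq j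
  have hden : (r.den : ℝ) * s.angle = r.num := by
    rw [← hr]
    exact_mod_cast Rat.den_mul_eq_num r
  have hinteger : (r.den : ℝ) * s.angleFrac j = ((s.p j * r.num - r.den * N : ℤ) : ℝ) := by
    push_cast
    linear_combination s.p j * hden - r.den * hN
  have hpos : 0 < (r.den : ℝ) * s.angleFrac j :=
    mul_pos (by exact_mod_cast r.pos) (s.angleFrac_pos j)
  have hlt : (r.den : ℝ) * s.angleFrac j < 1 :=
    calc (r.den : ℝ) * s.angleFrac j ≤ s.a j * s.angleFrac j := by
          refine mul_le_mul_of_nonneg_right ?_ (s.angleFrac_pos j).le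
          exact hj.le.trans ((s.two_pow_le_p j).trans (s.p_le_a_cast j))
      _ ≤ 2 * s.drift j := s.a_mul_angleFrac_le j
      _ < 1 := by linarith [s.drift_le_one_div_million j]
  rw [hinteger] at hpos hlt
  norm_cast at hpos hlt
  omega

/-! ### The cocycle -/

/-- The `j`-th spike function, a bump of width `1 / a j` repeated `p j` times around the circle. -/
def wave (j : ℕ) (x : Torus1) : ℝ := spike (s.a j) (s.p j • x) / 2

/-- The change of the `j`-th spike function under `n` steps of the rotation. -/
def waveDiff (n j : ℕ) (x : Torus1) : ℝ := s.wave j (x + n • (s.angle : Torus1)) - s.wave j x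

/-- The cocycle over the rotation by `s.angle` which is the formal coboundary of the sum of the
spike functions; `n` is the number of steps. -/
def cocycle (n : ℕ) (x : Torus1) : ℝ := ∑' j, s.waveDiff n j x

theorem continuous_wave (j : ℕ) : Continuous (s.wave j) :=
  ((continuous_spike _).comp (continuous_const_smul _)).div_const 2

theorem wave_nonneg (j : ℕ) (x : Torus1) : 0 ≤ s.wave j x :=
  div_nonneg (spike_nonneg _ _) zero_le_two

theorem wave_le_half (j : ℕ) (x : Torus1) : s.wave j x ≤ 1 / 2 :=
  div_le_div_of_nonneg_right (spike_le_one _ _) zero_le_two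

theorem abs_wave_sub_le (j : ℕ) (x y : Torus1) :
    |s.wave j x - s.wave j y| ≤ Real.pi * s.a j * ‖s.p j • (x - y)‖ := by
  have h := abs_spike_sub_le (s.a j) (s.p j • x) (s.p j • y)
  rw [wave, wave, ← sub_div, abs_div, abs_two, smul_sub]
  linarith

theorem abs_wave_sub_le_slope (j : ℕ) (x y : Torus1) :
    |s.wave j x - s.wave j y| ≤ Real.pi * s.slope j * ‖x - y‖ :=
  calc |s.wave j x - s.wave j y| ≤ Real.pi * s.a j * ‖s.p j • (x - y)‖ := s.abs_wave_sub_le j x y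
    _ ≤ Real.pi * s.a j * (s.p j * ‖x - y‖) := by gcongr; exact norm_nsmul_le
    _ = Real.pi * s.slope j * ‖x - y‖ := by rw [slope]; ring

theorem norm_p_nsmul_nsmul_angle_le (n j : ℕ) :
    ‖s.p j • n • (s.angle : Torus1)‖ ≤ n * s.angleFrac j := by
  rw [p_nsmul_nsmul_angle]
  refine (QuotientAddGroup.norm_mk_le_norm).trans_eq ?_
  exact abs_of_nonneg (mul_nonneg n.cast_nonneg (s.angleFrac_pos j).le)

theorem abs_waveDiff_le (n j : ℕ) (x : Torus1) :
    |s.waveDiff n j x| ≤ 2 * Real.pi * n * s.drift j :=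
  calc |s.waveDiff n j x| ≤ Real.pi * s.a j * ‖s.p j • (x + n • (s.angle : Torus1) - x)‖ :=
        s.abs_wave_sub_le j _ _
    _ ≤ Real.pi * s.a j * (n * s.angleFrac j) := by
        rw [add_sub_cancel_left]
        gcongr
        exact s.norm_p_nsmul_nsmul_angle_le n j
    _ = Real.pi * n * (s.a j * s.angleFrac j) := by ring
    _ ≤ Real.pi * n * (2 * s.drift j) := by gcongr ?_ * ?_; exact s.a_mul_angleFrac_le j
    _ = 2 * Real.pi * n * s.drift j := by ring

theorem summable_waveDiff (n : ℕ) (x : Torus1) : Summable fun j => s.waveDiff n j x :=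
  .of_norm_bounded ((s.summable_drift 0).mul_left _) fun j => s.abs_waveDiff_le n j x

theorem continuous_cocycle (n : ℕ) : Continuous (s.cocycle n) :=
  continuous_tsum
    (fun j => ((s.continuous_wave j).comp (continuous_add_const _)).sub (s.continuous_wave j))
    ((s.summable_drift 0).mul_left _) fun j x => s.abs_waveDiff_le n j x

theorem cocycle_add_one (n : ℕ) (x : Torus1) :
    s.cocycle (n + 1) x = s.cocycle n x + s.cocycle 1 (x + n • (s.angle : Torus1)) := by
  unfold cocycle
  rw [← (s.summable_waveDiff n x).tsum_add (s.summable_waveDiff 1 (x + n • (s.angle : Torus1)))]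
  refine tsum_congr fun j => ?_
  rw [waveDiff, waveDiff, waveDiff, one_nsmul, succ_nsmul, add_assoc]
  ring

theorem sum_cocycle_one (n : ℕ) (x : Torus1) :
    ∑ i ∈ Finset.range n, s.cocycle 1 (x + i • (s.angle : Torus1)) = s.cocycle n x := by
  induction n with
  | zero => simp [cocycle, waveDiff]
  | succ n ih => rw [Finset.sum_range_succ, ih, ← cocycle_add_one]

theorem abs_cocycle_sub_sum_waveDiff_le (J n : ℕ) (x : Torus1) :
    |s.cocycle n x - ∑ j ∈ Finset.range J, s.waveDiff n j x| ≤ 4 * Real.pi * n * s.drift J := by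
  rw [cocycle, ← (s.summable_waveDiff n x).sum_add_tsum_nat_add J, add_sub_cancel_left]
  calc ‖∑' j, s.waveDiff n (j + J) x‖ ≤ ∑' j, 2 * Real.pi * n * s.drift (j + J) :=
        tsum_of_norm_bounded ((s.summable_drift J).mul_left _).hasSum
          fun j => s.abs_waveDiff_le n (j + J) x
    _ = 2 * Real.pi * n * ∑' j, s.drift (j + J) := tsum_mul_left
    _ ≤ 2 * Real.pi * n * (2 * s.drift J) := by gcongr; exact s.tsum_drift_le J
    _ = 4 * Real.pi * n * s.drift J := by ring

theorem abs_waveDiff_sub_le (n j : ℕ) (x y : Torus1) :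
    |s.waveDiff n j x - s.waveDiff n j y| ≤ 2 * Real.pi * s.slope j * ‖x - y‖ := by
  have hend := s.abs_wave_sub_le_slope j (x + n • (s.angle : Torus1)) (y + n • (s.angle : Torus1))
  have hstart := s.abs_wave_sub_le_slope j x y
  rw [add_sub_add_right_eq_sub] at hend
  calc |s.waveDiff n j x - s.waveDiff n j y|
      = |(s.wave j (x + n • (s.angle : Torus1)) - s.wave j (y + n • (s.angle : Torus1))) -
          (s.wave j x - s.wave j y)| := by rw [waveDiff, waveDiff]; congr 1; ring
    _ ≤ _ := abs_sub _ _
    _ ≤ 2 * Real.pi * s.slope j * ‖x - y‖ := by linarith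

theorem abs_cocycle_sub_le (J n : ℕ) (x y : Torus1) :
    |s.cocycle n x - s.cocycle n y| ≤
      2 * Real.pi * (∑ j ∈ Finset.range J, s.slope j) * ‖x - y‖ + 8 * Real.pi * n * s.drift J := by
  have hx := s.abs_cocycle_sub_sum_waveDiff_le J n x
  have hy := s.abs_cocycle_sub_sum_waveDiff_le J n y
  have hxy : |∑ j ∈ Finset.range J, s.waveDiff n j x - ∑ j ∈ Finset.range J, s.waveDiff n j y| ≤
      2 * Real.pi * (∑ j ∈ Finset.range J, s.slope j) * ‖x - y‖ := by
    rw [← Finset.sum_sub_distrib, Finset.mul_sum, Finset.sum_mul]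
    exact (Finset.abs_sum_le_sum_abs _ _).trans
      (Finset.sum_le_sum fun j _ => s.abs_waveDiff_sub_le n j x y)
  rw [abs_le] at *
  constructor <;> linarith

theorem waveDiff_one_coe (j : ℕ) (x : ℝ) :
    s.waveDiff 1 j x = 1 / 2 * (spikeLift (s.a j) (s.p j * x + s.angleFrac j) -
      spikeLift (s.a j) (s.p j * x)) := by
  rw [waveDiff, wave, wave, one_nsmul, smul_add, p_nsmul_angle, ← AddCircle.coe_nsmul,
    nsmul_eq_mul, ← AddCircle.coe_add, spike_coe, spike_coe]
  ring

theorem norm_iteratedFDeriv_waveDiff_one_le (j i : ℕ) (x : ℝ) :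
    ‖iteratedFDeriv ℝ i (fun x : ℝ => s.waveDiff 1 j x) x‖ ≤
      s.p j ^ i * (2 * Real.pi * s.a j ^ 2) ^ (i + 1) * s.angleFrac j := by
  have hlift := contDiff_spikeLift (s.a j) (n := i)
  have hshift : ContDiff ℝ i fun y => spikeLift (s.a j) (y + s.angleFrac j) :=
    hlift.comp (contDiff_id.add contDiff_const)
  have hbound := abs_iteratedDeriv_spikeLift_sub_le (s.a j) i
    (s.p j * x + s.angleFrac j) (s.p j * x)
  rw [add_sub_cancel_left, abs_of_pos (s.angleFrac_pos j)] at hbound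
  simp_rw [norm_iteratedFDeriv_eq_norm_iteratedDeriv, waveDiff_one_coe]
  rw [iteratedDeriv_const_mul_field, iteratedDeriv_comp_const_mul
    (f := fun y => spikeLift (s.a j) (y + s.angleFrac j) - spikeLift (s.a j) y)
    (hshift.sub hlift)]
  beta_reduce
  rw [iteratedDeriv_fun_sub hshift.contDiffAt hlift.contDiffAt, iteratedDeriv_comp_add_const,
    norm_mul, norm_mul, norm_pow, Real.norm_natCast, mul_assoc]
  calc _ ≤ 1 * ((s.p j : ℝ) ^ i *
          ((2 * Real.pi * s.a j ^ 2) ^ (i + 1) * s.angleFrac j)) := by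
        gcongr
        · norm_num
        · exact hbound
    _ = _ := one_mul _

theorem summable_iteratedDeriv_bound (i : ℕ) :
    Summable fun j =>
      s.p j ^ i * (2 * Real.pi * (s.a j : ℝ) ^ 2) ^ (i + 1) * s.angleFrac j := by
  refine .of_norm_bounded_eventually_nat summable_geometric_two ?_
  filter_upwards [eventually_ge_atTop (4 * i)] with j hj
  have ha := s.million_le_a_cast j
  have : (0 : ℝ) < s.a j := by linarith
  have hpi : 2 * Real.pi * (s.a j : ℝ) ^ 2 ≤ s.a j ^ 3 := by
    rw [pow_succ' (s.a j : ℝ) 2]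
    gcongr
    linarith [Real.pi_le_four]
  have hfrac : s.angleFrac j ≤ s.a j ^ 2 / s.p (j + 1) :=
    (s.angleFrac_le j).trans <| by
      rw [sq]
      gcongr
      · linarith
      · exact s.p_le_a j
  have hpow : (s.a j : ℝ) ^ (4 * i + 6) ≤ s.p (j + 1) := s.a_pow_le_p_succ_of_le (by omega)
  rw [Real.norm_of_nonneg (mul_nonneg (by positivity) (s.angleFrac_pos j).le)]
  calc s.p j ^ i * (2 * Real.pi * (s.a j : ℝ) ^ 2) ^ (i + 1) * s.angleFrac j
      ≤ (s.a j : ℝ) ^ i * (s.a j ^ 3) ^ (i + 1) * (s.a j ^ 2 / s.p (j + 1)) := by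
        gcongr
        · exact (s.angleFrac_pos j).le
        · exact s.p_le_a j
    _ = (s.a j : ℝ) ^ (4 * i + 6) / s.p (j + 1) / s.a j := by field_simp; ring
    _ ≤ 1 / (s.a j : ℝ) := by gcongr; exact div_le_one_of_le₀ hpow (Nat.cast_nonneg _)
    _ ≤ (1 / 2) ^ j := by
        rw [one_div_pow]
        gcongr
        exact (s.two_pow_le_p j).trans (s.p_le_a_cast j)

theorem contDiff_cocycle_one : ContDiff ℝ (⊤ : ℕ∞) fun x : ℝ => s.cocycle 1 x := by
  refine contDiff_tsum (fun j => ?_) (fun i _ => s.summable_iteratedDeriv_bound i)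
    fun i j x _ => s.norm_iteratedFDeriv_waveDiff_one_le j i x
  simp_rw [waveDiff_one_coe]
  have := contDiff_spikeLift (s.a j) (n := (⊤ : ℕ∞))
  fun_prop

/-- The transfer function of the cocycle: the sum of the spike functions, where it converges. -/
def transfer (x : Torus1) : ℝ := ∑' j, s.wave j x

theorem measurable_transfer : Measurable s.transfer :=
  .tsum fun j => (s.continuous_wave j).measurable

theorem lintegral_ofReal_wave_le (j : ℕ) :
    ∫⁻ x, ENNReal.ofReal (s.wave j x) ≤ ENNReal.ofReal (2 * (1 / 2) ^ j) := by
  have hnsmul : MeasurePreserving (fun x : Torus1 => s.p j • x) :=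
    (AddCircle.ergodic_nsmul (by linarith [s.million_le_p j])).toMeasurePreserving
  calc ∫⁻ x, ENNReal.ofReal (s.wave j x) ≤ ∫⁻ x, ENNReal.ofReal (spike (s.a j) (s.p j • x)) :=
        lintegral_mono fun x => ENNReal.ofReal_le_ofReal (half_le_self (spike_nonneg _ _))
    _ = ∫⁻ x, ENNReal.ofReal (spike (s.a j) x) :=
        hnsmul.lintegral_comp (continuous_spike _).measurable.ennreal_ofReal
    _ ≤ ENNReal.ofReal (2 / s.a j) := lintegral_ofReal_spike_le (s.a_pos j)
    _ ≤ ENNReal.ofReal (2 * (1 / 2) ^ j) := by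
        rw [one_div_pow, mul_one_div]
        gcongr
        exact (s.two_pow_le_p j).trans (s.p_le_a_cast j)

theorem ae_summable_wave : ∀ᵐ x : Torus1, Summable fun j => s.wave j x := by
  have hmeas (j : ℕ) : Measurable fun x => ENNReal.ofReal (s.wave j x) :=
    (s.continuous_wave j).measurable.ennreal_ofReal
  have hfinite : ∫⁻ x, ∑' j, ENNReal.ofReal (s.wave j x) ≠ ∞ := by
    rw [lintegral_tsum fun j => (hmeas j).aemeasurable]
    refine ne_top_of_le_ne_top ?_ (ENNReal.tsum_le_tsum s.lintegral_ofReal_wave_le)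
    exact (summable_geometric_two.mul_left 2).tsum_ofReal_ne_top
  filter_upwards [ae_lt_top (.tsum hmeas) hfinite] with x hx
  exact (ENNReal.summable_toReal hx.ne).congr fun j => ENNReal.toReal_ofReal (s.wave_nonneg j x)

theorem ae_cocycle_one_eq :
    ∀ᵐ x : Torus1, s.cocycle 1 x = s.transfer (x + s.angle) - s.transfer x := by
  have hshift := (measurePreserving_add_right volume (s.angle : Torus1)).quasiMeasurePreserving
  filter_upwards [s.ae_summable_wave, hshift.ae s.ae_summable_wave] with x hx hx'
  rw [transfer, transfer, ← hx'.tsum_sub hx]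
  simp only [cocycle, waveDiff, one_nsmul]

/-! ### Upper bound for Bowen cover numbers -/

/-- The diffeomorphism realizing the scales `s`: the skew product with cocycle `s.cocycle 1`. The
translation `β` of the second coordinate is there to make it uniquely ergodic. -/
def diffeo (β : Torus1) : Torus2 → Torus2 := skewRotation s.angle β (s.cocycle 1)

theorem isCkTorusDiffeo_diffeo (β : Torus1) : IsCkTorusDiffeo ⊤ (s.diffeo β) :=
  isCkTorusDiffeo_skewRotation s.contDiff_cocycle_one _ _

theorem exists_uniquelyErgodicWithVolume_diffeo :
    ∃ β, UniquelyErgodicWithVolume (s.diffeo β) := by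
  obtain ⟨β, hβ⟩ :=
    exists_denseRange_nsmul_prod (denseRange_nsmul_coe_of_irrational s.irrational_angle)
  exact ⟨β, uniquelyErgodicWithVolume_skewRotation (s.continuous_cocycle 1).measurable
    s.measurable_transfer hβ s.ae_cocycle_one_eq⟩

theorem hasUpperMeasSlowEntropy_diffeo_zero (β : Torus1) {a : ℕ → ℝ → ℝ}
    (ha : ∀ t > 0, Tendsto (fun n => a n t) atTop atTop) :
    HasUpperMeasSlowEntropy volume (s.diffeo β) a 0 := by
  refine hasUpperMeasSlowEntropy_zero_of_hammingCoverNum_le ha fun P ε hε => ?_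
  obtain ⟨C, hC⟩ := exists_hammingCoverNum_skewRotation_le (s.continuous_cocycle 1).measurable
    s.measurable_transfer s.ae_cocycle_one_eq P hε
  exact ⟨C, (eventually_gt_atTop 0).mono hC⟩

theorem diffeo_iterate (β : Torus1) (n : ℕ) (z : Torus2) :
    (s.diffeo β)^[n] z =
      (z.1 + n • (s.angle : Torus1), z.2 + n • β + (s.cocycle n z.1 : Torus1)) := by
  rw [diffeo, skewRotation_iterate, sum_cocycle_one]

theorem dist_diffeo_iterate (β : Torus1) (n : ℕ) (z w : Torus2) :
    dist ((s.diffeo β)^[n] z) ((s.diffeo β)^[n] w) =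
      max ‖z.1 - w.1‖ ‖z.2 - w.2 + ((s.cocycle n z.1 - s.cocycle n w.1 : ℝ) : Torus1)‖ := by
  rw [diffeo_iterate, diffeo_iterate, Prod.dist_eq, dist_eq_norm, dist_eq_norm,
    add_sub_add_right_eq_sub, add_sub_add_comm, add_sub_add_right_eq_sub, AddCircle.coe_sub]

theorem dist_diffeo_iterate_lt (β : Torus1) {ε : ℝ} (hε : 0 < ε) {J i : ℕ}
    (hi : i * s.drift (J + 1) ≤ ε / 104) {z w : Torus2}
    (h₁ : ‖z.1 - w.1‖ ≤ ε / (40 * s.slope J)) (h₂ : ‖z.2 - w.2‖ ≤ ε / 4) :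
    dist ((s.diffeo β)^[i] z) ((s.diffeo β)^[i] w) < ε := by
  have hslope := s.million_le_slope J
  have hpi := Real.pi_lt_d2
  have hbase : 2 * Real.pi * (∑ j ∈ Finset.range (J + 1), s.slope j) * ‖z.1 - w.1‖ ≤
      Real.pi * ε / 10 :=
    calc _ ≤ 2 * Real.pi * (2 * s.slope J) * (ε / (40 * s.slope J)) := by
          gcongr
          exact s.sum_slope_succ_le J
      _ = Real.pi * ε / 10 := by field_simp; norm_num
  have htail : 8 * Real.pi * i * s.drift (J + 1) ≤ 8 * Real.pi * (ε / 104) := by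
    rw [mul_assoc]
    gcongr
  have hcocycle : |s.cocycle i z.1 - s.cocycle i w.1| ≤ 3 / 5 * ε :=
    (s.abs_cocycle_sub_le (J + 1) i z.1 w.1).trans (by nlinarith)
  rw [dist_diffeo_iterate]
  refine max_lt (h₁.trans_lt (div_lt_self hε (by linarith))) ?_
  calc _ ≤ ‖z.2 - w.2‖ + ‖((s.cocycle i z.1 - s.cocycle i w.1 : ℝ) : Torus1)‖ := norm_add_le _ _
    _ ≤ ε / 4 + |s.cocycle i z.1 - s.cocycle i w.1| :=
        add_le_add h₂ QuotientAddGroup.norm_mk_le_norm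
    _ < ε := by linarith

theorem bowenCoverNum_diffeo_le (β : Torus1) {ε : ℝ} (hε : 0 < ε) (hε1 : ε ≤ 1) {J n : ℕ}
    (hJ : 104 ≤ ε * s.slope (J + 1)) (hn : n * s.slope (J + 1) ^ 2 ≤ s.p (J + 2)) :
    bowenCoverNum (s.diffeo β) n ε ≤ 640 / ε ^ 2 * s.slope J := by
  have hslope := s.million_le_slope J
  have hslope' := s.slope_pos (J + 1)
  obtain ⟨F, hFcard, hF⟩ := exists_finset_torus1_cover (δ := ε / (40 * s.slope J))
    (by positivity) (div_le_one_of_le₀ (by linarith) (by linarith))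
  obtain ⟨G, hGcard, hG⟩ := exists_finset_torus1_cover (δ := ε / 4) (by positivity) (by linarith)
  have hcover (z : Torus2) : ∃ w ∈ F ×ˢ G, bowenDist (s.diffeo β) n w z < ε := by
    obtain ⟨f, hf, hzf⟩ := hF z.1
    obtain ⟨g, hg, hzg⟩ := hG z.2
    refine ⟨(f, g), Finset.mk_mem_product hf hg, (bowenDist_lt_iff hε).2 fun i hi => ?_⟩
    rw [dist_comm]
    refine s.dist_diffeo_iterate_lt β hε ?_ hzf hzg
    calc i * s.drift (J + 1) ≤ n * s.drift (J + 1) := by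
          gcongr
          exact (s.drift_pos _).le
      _ ≤ 1 / s.slope (J + 1) := by
          rw [drift, mul_div_assoc', div_le_div_iff₀ (s.p_cast_pos _) hslope', mul_assoc, ← sq,
            one_mul]
          exact hn
      _ ≤ ε / 104 := by rwa [div_le_div_iff₀ hslope' (by norm_num), one_mul]
  calc (bowenCoverNum (s.diffeo β) n ε : ℝ) ≤ (F ×ˢ G).card := by
        exact_mod_cast bowenCoverNum_le_card hcover
    _ = F.card * G.card := by rw [Finset.card_product, Nat.cast_mul]
    _ ≤ 2 / (ε / (40 * s.slope J)) * (2 / (ε / 4)) := by gcongr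
    _ = 640 / ε ^ 2 * s.slope J := by field_simp; norm_num

theorem eventually_exists_index (J₀ : ℕ) :
    ∀ᶠ n : ℕ in atTop, ∃ J ≥ J₀, n * s.slope (J + 1) ^ 2 ≤ s.p (J + 2) ∧
      s.p (J + 1) ≤ s.slope J ^ 2 * n := by
  filter_upwards [eventually_ge_atTop (s.p (J₀ + 1))] with n hn
  have hexists : ∃ k, n * s.slope (J₀ + k + 1) ^ 2 ≤ s.p (J₀ + k + 2) := by
    obtain ⟨k, hk⟩ := pow_unbounded_of_one_lt (n : ℝ) one_lt_two
    have hslope := s.million_le_slope (J₀ + k + 1)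
    refine ⟨k, ?_⟩
    calc n * s.slope (J₀ + k + 1) ^ 2 ≤ s.slope (J₀ + k + 1) * s.slope (J₀ + k + 1) ^ 2 := by
          gcongr
          calc (n : ℝ) ≤ 2 ^ (J₀ + k + 1) :=
                hk.le.trans (pow_le_pow_right₀ one_le_two (by omega))
            _ ≤ s.slope (J₀ + k + 1) := (s.two_pow_le_p _).trans (s.p_le_slope _)
      _ = s.slope (J₀ + k + 1) ^ 3 := by ring
      _ ≤ s.slope (J₀ + k + 1) ^ 6 := pow_le_pow_right₀ (by linarith) (by norm_num)
      _ ≤ s.p (J₀ + k + 2) := s.slope_pow_six_le _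
  refine ⟨J₀ + Nat.find hexists, le_self_add, Nat.find_spec hexists, ?_⟩
  rcases hk : Nat.find hexists with _ | k
  · have hslope := s.million_le_slope J₀
    calc (s.p (J₀ + 1) : ℝ) ≤ n := by exact_mod_cast hn
      _ ≤ s.slope J₀ ^ 2 * n := le_mul_of_one_le_left n.cast_nonneg (one_le_pow₀ (by linarith))
  · rw [mul_comm]
    exact (not_le.1 (Nat.find_min hexists (hk ▸ k.lt_succ_self))).le

theorem tendsto_bowenCoverNum_diffeo_div (β : Torus1) {ε : ℝ} (hε : 0 < ε) (hε1 : ε ≤ 1)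
    {b : ℕ → ℝ} (hb : ∀ C : ℝ, ∀ᶠ J in atTop, ∀ n : ℕ,
      s.p (J + 1) ≤ s.slope J ^ 2 * n → C * s.slope J ≤ b n) :
    Tendsto (fun n => (bowenCoverNum (s.diffeo β) n ε : ℝ) / b n) atTop (𝓝 0) := by
  have hlarge : ∀ᶠ J in atTop, 104 ≤ ε * s.slope (J + 1) := by
    obtain ⟨k, hk⟩ := pow_unbounded_of_one_lt (104 / ε) one_lt_two
    filter_upwards [eventually_ge_atTop k] with J hJ
    rw [mul_comm, ← div_le_iff₀ hε]
    calc 104 / ε ≤ 2 ^ (J + 1) := hk.le.trans (pow_le_pow_right₀ one_le_two (by omega))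
      _ ≤ s.slope (J + 1) := (s.two_pow_le_p _).trans (s.p_le_slope _)
  refine Metric.tendsto_nhds.2 fun η hη => ?_
  obtain ⟨J₀, hJ₀⟩ :=
    eventually_atTop.1 (hlarge.and (hb (2 * (640 / ε ^ 2) / η)))
  filter_upwards [s.eventually_exists_index J₀] with n ⟨J, hJ, hupper, hlower⟩
  have hcover := s.bowenCoverNum_diffeo_le β hε hε1 (hJ₀ J hJ).1 hupper
  have hscale := (hJ₀ J hJ).2 n hlower
  have hslope := s.slope_pos J
  have hbn : 0 < b n := lt_of_lt_of_le (by positivity) hscale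
  rw [Real.dist_0_eq_abs, abs_of_nonneg (by positivity), div_lt_iff₀ hbn]
  calc (bowenCoverNum (s.diffeo β) n ε : ℝ) ≤ 640 / ε ^ 2 * s.slope J := hcover
    _ < 2 * (640 / ε ^ 2 * s.slope J) := lt_two_mul_self (by positivity)
    _ = η * (2 * (640 / ε ^ 2) / η * s.slope J) := by field_simp
    _ ≤ η * b n := by gcongr

/-! ### Lower bound for Bowen cover numbers -/

theorem continuous_diffeo (β : Torus1) : Continuous (s.diffeo β) :=
  (continuous_fst.add_const _).prodMk ((continuous_snd.add_const _).add
    (continuous_coe_torus1.comp ((s.continuous_cocycle 1).comp continuous_fst)))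

/-- The points `-4 k / (a J * p J)` whose orbits are separated by the `J`-th spikes: `p J` times
the `k`-th of them lies four spike widths behind the `(k - 1)`-st. -/
def witness (J k : ℕ) : Torus1 := ((-(4 * k / (s.a J * s.p J)) : ℝ) : Torus1)

/-- The time when the orbit of `s.witness J k` arrives at a `J`-th spike. -/
def hitTime (J k : ℕ) : ℕ := ⌈4 * k / s.a J / s.angleFrac J⌉₊

theorem hitTime_lt {J k : ℕ} (hk : 16 * k ≤ s.a J) : s.hitTime J k < s.p (J + 1) := by
  have ha : (0 : ℝ) < s.a J := by exact_mod_cast s.a_pos J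
  have hp := s.p_cast_pos (J + 1)
  have hfrac : 1 / (s.p (J + 1) : ℝ) ≤ s.angleFrac J := by
    refine le_trans ?_ (s.le_angleFrac J)
    gcongr
    linarith [s.million_le_p_cast J]
  have hquarter : 4 * k / s.a J ≤ (1 / 4 : ℝ) := by
    rw [div_le_iff₀ ha]
    have : (16 * k : ℝ) ≤ s.a J := by exact_mod_cast hk
    linarith
  have hceil : (s.hitTime J k : ℝ) < 4 * k / s.a J / s.angleFrac J + 1 :=
    Nat.ceil_lt_add_one (by have := s.angleFrac_pos J; positivity)
  have hbound : 4 * k / s.a J / s.angleFrac J ≤ s.p (J + 1) / 4 :=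
    calc 4 * k / s.a J / s.angleFrac J ≤ 1 / 4 / (1 / s.p (J + 1)) := by gcongr
      _ = s.p (J + 1) / 4 := by field_simp
  have := s.million_le_p_cast (J + 1)
  exact_mod_cast (by linarith : (s.hitTime J k : ℝ) < s.p (J + 1))

theorem exists_wave_witness_add_hitTime_eq (J k l : ℕ) : ∃ e ∈ Icc (0 : ℝ) (1 / 1000),
    s.wave J (s.witness J k + s.hitTime J l • (s.angle : Torus1)) =
      spike (s.a J) (((4 * (l - k) + e) / s.a J : ℝ) : Torus1) / 2 := by
  have ha : (0 : ℝ) < s.a J := by exact_mod_cast s.a_pos J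
  have hp := s.p_cast_pos J
  have hfrac := s.angleFrac_pos J
  have hlower : 4 * l / s.a J ≤ s.hitTime J l * s.angleFrac J :=
    (div_le_iff₀ hfrac).1 (Nat.le_ceil _)
  have hupper : (s.hitTime J l : ℝ) ≤ 4 * l / s.a J / s.angleFrac J + 1 :=
    (Nat.ceil_lt_add_one (by positivity)).le
  rw [div_add_one hfrac.ne', le_div_iff₀ hfrac] at hupper
  refine ⟨s.a J * (s.hitTime J l * s.angleFrac J - 4 * l / s.a J), ⟨?_, ?_⟩, ?_⟩
  · exact mul_nonneg ha.le (sub_nonneg.2 hlower)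
  · calc _ ≤ s.a J * s.angleFrac J := by gcongr; linarith
      _ ≤ 1 / 1000 := by linarith [s.a_mul_angleFrac_le J, s.drift_le_one_div_million J]
  · rw [wave, smul_add, p_nsmul_nsmul_angle, witness, ← AddCircle.coe_nsmul, nsmul_eq_mul,
      ← AddCircle.coe_add]
    congr 3
    field_simp
    ring

theorem le_wave_witness_add_hitTime (J k : ℕ) :
    99 / 200 ≤ s.wave J (s.witness J k + s.hitTime J k • (s.angle : Torus1)) := by
  obtain ⟨e, ⟨he0, he1⟩, hwave⟩ := s.exists_wave_witness_add_hitTime_eq J k k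
  have hspike : 99 / 100 ≤ spike (s.a J) ((e / s.a J : ℝ) : Torus1) := by
    refine le_spike_of_le ?_
    calc s.a J * ‖((e / s.a J : ℝ) : Torus1)‖ ≤ s.a J * |e / s.a J| := by
          gcongr
          exact QuotientAddGroup.norm_mk_le_norm
      _ ≤ 1 / 1000 := by
          rwa [abs_div, Nat.abs_cast, mul_div_cancel₀ _ (by exact_mod_cast (s.a_pos J).ne'),
            abs_of_nonneg he0]
  rw [hwave, sub_self, mul_zero, zero_add]
  linarith

theorem wave_witness_add_hitTime_le {J k l : ℕ} (hkl : k ≠ l) (hk : 16 * k ≤ s.a J)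
    (hl : 16 * l ≤ s.a J) :
    s.wave J (s.witness J k + s.hitTime J l • (s.angle : Torus1)) ≤ 1 / 74 := by
  obtain ⟨e, ⟨he0, he1⟩, hwave⟩ := s.exists_wave_witness_add_hitTime_eq J k l
  have ha := s.million_le_a_cast J
  have hk' : (16 * k : ℝ) ≤ s.a J := by exact_mod_cast hk
  have hl' : (16 * l : ℝ) ≤ s.a J := by exact_mod_cast hl
  have hfar : 3 ≤ |4 * (l - k) + e| := by
    rcases hkl.lt_or_gt with h | h
    · have : (k + 1 : ℝ) ≤ l := by exact_mod_cast h
      exact le_abs.2 (.inl (by linarith))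
    · have : (l + 1 : ℝ) ≤ k := by exact_mod_cast h
      exact le_abs.2 (.inr (by linarith))
  have hnear : |4 * (l - k) + e| ≤ s.a J / 2 := by
    rw [abs_le]
    constructor <;> linarith [k.cast_nonneg (α := ℝ), l.cast_nonneg (α := ℝ)]
  have habs : |(4 * (l - k) + e) / s.a J| = |4 * (l - k) + e| / s.a J := by
    rw [abs_div, Nat.abs_cast]
  have hnorm : ‖(((4 * (l - k) + e) / s.a J : ℝ) : Torus1)‖ = |4 * (l - k) + e| / s.a J := by
    rw [(AddCircle.norm_coe_eq_abs_iff 1 one_ne_zero).2, habs]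
    rw [habs, abs_one, div_le_iff₀ (by linarith)]
    linarith
  have hspike := spike_le_of_three_le (a := s.a J)
    (x := (((4 * (l - k) + e) / s.a J : ℝ) : Torus1))
    (by rwa [hnorm, mul_div_cancel₀ _ (by linarith)])
  rw [hwave]
  linarith

theorem hitTime_zero (J : ℕ) : s.hitTime J 0 = 0 := by simp [hitTime]

theorem abs_waveDiff_hitTime_sub_sub_le {J k l : ℕ} (hkl : k ≠ l) (hk0 : k ≠ 0) (hl0 : l ≠ 0)
    (hk : 16 * k ≤ s.a J) (hl : 16 * l ≤ s.a J) :
    |s.waveDiff (s.hitTime J k) J (s.witness J k) - s.waveDiff (s.hitTime J k) J (s.witness J l)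
      - 1 / 2| ≤ 1 / 25 := by
  have hstart {m : ℕ} (hm0 : m ≠ 0) (hm : 16 * m ≤ s.a J) :
      s.wave J (s.witness J m) ≤ 1 / 74 := by
    simpa [hitTime_zero] using s.wave_witness_add_hitTime_le hm0 hm (Nat.zero_le _)
  have hhit := s.le_wave_witness_add_hitTime J k
  have hhit' := s.wave_le_half J (s.witness J k + s.hitTime J k • (s.angle : Torus1))
  have hmiss := s.wave_witness_add_hitTime_le hkl.symm hl hk
  rw [abs_le]
  unfold waveDiff
  constructor <;> linarith [hstart hk0 hk, hstart hl0 hl, s.wave_nonneg J (s.witness J k),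
    s.wave_nonneg J (s.witness J l),
    s.wave_nonneg J (s.witness J l + s.hitTime J k • (s.angle : Torus1))]

theorem abs_cocycle_sub_sub_waveDiff_sub_le {J n : ℕ} (hn : n ≤ s.p (J + 1)) {x y : Torus1}
    (hxy : ‖x - y‖ ≤ 1 / s.p J) :
    |(s.cocycle n x - s.cocycle n y) - (s.waveDiff n J x - s.waveDiff n J y)| ≤ 1 / 1000 := by
  have hp := s.p_cast_pos J
  have hpi := Real.pi_lt_d2
  have hlower : |∑ j ∈ Finset.range J, s.waveDiff n j x - ∑ j ∈ Finset.range J, s.waveDiff n j y|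
      ≤ 2 * Real.pi / 10 ^ 5 :=
    calc _ ≤ ∑ j ∈ Finset.range J, |s.waveDiff n j x - s.waveDiff n j y| := by
          rw [← Finset.sum_sub_distrib]
          exact Finset.abs_sum_le_sum_abs _ _
      _ ≤ ∑ j ∈ Finset.range J, 2 * Real.pi * s.slope j * ‖x - y‖ :=
          Finset.sum_le_sum fun j _ => s.abs_waveDiff_sub_le n j x y
      _ = 2 * Real.pi * (∑ j ∈ Finset.range J, s.slope j) * ‖x - y‖ := by
          rw [Finset.mul_sum, Finset.sum_mul]
      _ ≤ 2 * Real.pi * (s.p J / 10 ^ 5) * (1 / s.p J) := by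
          gcongr
          rw [le_div_iff₀' (by norm_num)]
          exact s.mul_sum_slope_le J
      _ = 2 * Real.pi / 10 ^ 5 := by field_simp
  have hdrift : n * s.drift (J + 1) ≤ 1 / 10 ^ 6 := by
    have hslope := s.million_le_slope (J + 1)
    rw [le_div_iff₀ (by norm_num)]
    calc n * s.drift (J + 1) * 10 ^ 6
        ≤ s.slope (J + 1) * s.drift (J + 1) * s.slope (J + 1) ^ 4 := by
          have := s.drift_pos (J + 1)
          gcongr
          · exact (Nat.cast_le.2 hn).trans (s.p_le_slope (J + 1))
          · exact hslope.trans (le_self_pow₀ (by linarith) (by norm_num))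
      _ = s.drift (J + 1) * s.slope (J + 1) ^ 5 := by ring
      _ ≤ 1 := s.drift_mul_slope_pow_le _
  have htail (z : Torus1) := s.abs_cocycle_sub_sum_waveDiff_le (J + 1) n z
  simp only [Finset.sum_range_succ] at htail
  have hx := htail x
  have hy := htail y
  have htail_le : 4 * Real.pi * n * s.drift (J + 1) ≤ 4 * Real.pi * (1 / 10 ^ 6) := by
    rw [mul_assoc]
    gcongr
  rw [abs_le] at hlower hx hy ⊢
  constructor <;> linarith

theorem norm_witness_sub_le {J k l : ℕ} (hk : 16 * k ≤ s.a J) (hl : 16 * l ≤ s.a J) :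
    ‖s.witness J k - s.witness J l‖ ≤ 1 / s.p J := by
  have ha : (0 : ℝ) < s.a J := by exact_mod_cast s.a_pos J
  have hp := s.p_cast_pos J
  have hk' : (16 * k : ℝ) ≤ s.a J := by exact_mod_cast hk
  have hl' : (16 * l : ℝ) ≤ s.a J := by exact_mod_cast hl
  rw [witness, witness, ← AddCircle.coe_sub]
  calc _ ≤ |(-(4 * k / (s.a J * s.p J)) - -(4 * l / (s.a J * s.p J)) : ℝ)| :=
        QuotientAddGroup.norm_mk_le_norm
    _ = |4 * (l - k : ℝ) / (s.a J * s.p J)| := by ring_nf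
    _ = |4 * (l - k : ℝ)| / (s.a J * s.p J) := by rw [abs_div, abs_of_pos (mul_pos ha hp)]
    _ ≤ s.a J / (s.a J * s.p J) := by
        gcongr
        rw [abs_le]
        constructor <;> linarith [k.cast_nonneg (α := ℝ), l.cast_nonneg (α := ℝ)]
    _ = 1 / s.p J := by field_simp

theorem quarter_le_dist_diffeo_iterate_witness (β : Torus1) {J k l : ℕ} (hkl : k ≠ l)
    (hk0 : k ≠ 0) (hl0 : l ≠ 0) (hk : 16 * k ≤ s.a J) (hl : 16 * l ≤ s.a J) :
    1 / 4 ≤ dist ((s.diffeo β)^[s.hitTime J k] (s.witness J k, 0))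
      ((s.diffeo β)^[s.hitTime J k] (s.witness J l, 0)) := by
  have hwave := abs_le.1 (s.abs_waveDiff_hitTime_sub_sub_le hkl hk0 hl0 hk hl)
  have hothers := abs_le.1 (s.abs_cocycle_sub_sub_waveDiff_sub_le (s.hitTime_lt hk).le
    (s.norm_witness_sub_le hk hl))
  rw [dist_diffeo_iterate]
  refine le_max_of_le_right ?_
  rw [sub_self, zero_add]
  refine le_norm_coe_torus1 (le_abs.2 (.inl ?_)) (abs_le.2 ⟨?_, ?_⟩) <;> linarith

theorem a_le_bowenCoverNum_diffeo (β : Torus1) {ε : ℝ} (hε : 0 < ε) (hε8 : ε ≤ 1 / 8) (J : ℕ) :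
    (1 / 32 : ℝ) * s.a J ≤ bowenCoverNum (s.diffeo β) (s.p (J + 1)) ε := by
  have hcard : s.a J / 16 ≤ bowenCoverNum (s.diffeo β) (s.p (J + 1)) ε := by
    have := card_le_bowenCoverNum (s.continuous_diffeo β) (s := Finset.Icc 1 (s.a J / 16))
      (f := fun k => (s.witness J k, 0)) (n := s.p (J + 1)) hε fun k hk l hl hkl => ?_
    · simpa using this
    · rw [Finset.mem_Icc] at hk hl
      have hk16 : 16 * k ≤ s.a J := by omega
      refine ⟨s.hitTime J k, s.hitTime_lt hk16, ?_⟩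
      linarith [s.quarter_le_dist_diffeo_iterate_witness β hkl (by omega) (by omega) hk16
        (by omega : 16 * l ≤ s.a J)]
  have ha : s.a J ≤ 32 * (s.a J / 16) := by
    have : 16 ≤ s.a J := (by norm_num : 16 ≤ 10 ^ 6).trans ((s.million_le_p J).trans (s.p_le_a J))
    omega
  have : (s.a J : ℝ) ≤ 32 * bowenCoverNum (s.diffeo β) (s.p (J + 1)) ε := by
    exact_mod_cast ha.trans (Nat.mul_le_mul_left 32 hcard)
  linarith

theorem tendsto_p_atTop : Tendsto s.p atTop atTop :=
  tendsto_atTop_mono (fun j => (Nat.lt_two_pow_self (n := j)).le.trans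
    (by exact_mod_cast s.two_pow_le_p j)) tendsto_id

theorem hasUpperTopSlowEntropy_diffeo_one (β : Torus1) {b : ℕ → ℝ → ℝ}
    (htop : ∀ t > 0, Tendsto (fun n => b n t) atTop atTop)
    (hle : ∀ t, 0 < t → t < 1 → ∀ J, b (s.p (J + 1)) t ≤ s.a J)
    (hge : ∀ t > 1, ∀ C : ℝ, ∀ᶠ J in atTop, ∀ n : ℕ,
      s.p (J + 1) ≤ s.slope J ^ 2 * n → C * s.slope J ≤ b n t) :
    HasUpperTopSlowEntropy (s.diffeo β) b 1 := by
  refine hasUpperTopSlowEntropy_of_limsup zero_le_one ?_ ?_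
  · filter_upwards [Ioc_mem_nhdsGT (by norm_num : (0 : ℝ) < 1 / 8)] with ε hε t ht0 ht1
    refine limsup_natCast_div_ofReal_pos (c := 1 / 32) (by norm_num) ?_
    have hp := s.tendsto_p_atTop.comp (tendsto_add_atTop_nat 1)
    refine hp.frequently (Eventually.frequently ?_)
    filter_upwards [hp.eventually ((htop t ht0).eventually_gt_atTop 0)] with J hJ
    have := s.a_le_bowenCoverNum_diffeo β hε.1 hε.2 J
    exact ⟨hJ, (mul_le_mul_of_nonneg_left (hle t ht0 ht1 J) (by norm_num)).trans this⟩
  · filter_upwards [Ioc_mem_nhdsGT zero_lt_one] with ε hε t ht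
    exact limsup_natCast_div_ofReal_eq_zero ((htop t (zero_lt_one.trans ht)).eventually_gt_atTop 0)
      (s.tendsto_bowenCoverNum_diffeo_div β hε.1 hε.2 (hge t ht))

end SpikeScales

/-! ### Scales adapted to the intermediate scale -/

/-- The scales adapted to the scaling family `intScale1 r q`: consecutive terms of
`p 0, a 0, p 1, a 1, …` are consecutive points `q ^ (k ! ^ r)` at which the intermediate scale is
explicit. The sequence starts at `k = 12` to make all of them large. -/
def factorialScales (r q : ℕ) (hr : r ≠ 0) (hq : 2 ≤ q) : SpikeScales where
  p j := q ^ (2 * j + 12).factorial ^ r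
  a j := q ^ (2 * j + 13).factorial ^ r
  p_dvd_succ j := pow_dvd_pow q (Nat.pow_le_pow_left (Nat.factorial_le (by lia)) r)
  million_le_p_zero :=
    calc 10 ^ 6 ≤ 2 ^ 20 := by norm_num
      _ ≤ q ^ 20 := Nat.pow_le_pow_left hq 20
      _ ≤ q ^ Nat.factorial 12 ^ r := by
          refine Nat.pow_le_pow_right (by lia) (le_trans ?_ (Nat.le_self_pow hr _))
          norm_num [Nat.factorial]
  p_le_a j :=
    Nat.pow_le_pow_right (by lia) (Nat.pow_le_pow_left (Nat.factorial_le (by lia)) r)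
  a_pow_le_p_succ j := by
    rw [← pow_mul]
    refine Nat.pow_le_pow_right (by lia) ?_
    calc (2 * j + 13).factorial ^ r * (j + 12)
        ≤ (2 * j + 13).factorial ^ r * (2 * j + 14) ^ r := by
          gcongr
          exact le_trans (by lia) (Nat.le_self_pow hr _)
      _ = (2 * (j + 1) + 12).factorial ^ r := by
          rw [← mul_pow, mul_comm, mul_add, Nat.factorial_succ (2 * j + 13)]

theorem tendsto_exponent_gap_atTop {r : ℕ} (hr : r ≠ 0) {t : ℝ} (ht : 1 < t) :
    Tendsto (fun J : ℕ => (t * (1 - 4 / (2 * J + 14)) - (1 + 1 / (2 * J + 13))) *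
      ((2 * J + 13).factorial : ℝ) ^ r) atTop atTop := by
  have hlin (c : ℝ) : Tendsto (fun J : ℕ => 2 * (J : ℝ) + c) atTop atTop :=
    tendsto_atTop_add_const_right _ _ (tendsto_natCast_atTop_atTop.const_mul_atTop two_pos)
  have hcoeff : Tendsto (fun J : ℕ => t * (1 - 4 / (2 * J + 14 : ℝ)) - (1 + 1 / (2 * J + 13)))
      atTop (𝓝 (t * (1 - 0) - (1 + 0))) :=
    (((hlin 14).const_div_atTop 4).const_sub 1 |>.const_mul t).sub
      (((hlin 13).const_div_atTop 1).const_add 1)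
  refine hcoeff.pos_mul_atTop (by linarith) (tendsto_atTop_mono (fun J => ?_) (hlin 13))
  calc (2 * J + 13 : ℝ) ≤ ((2 * J + 13).factorial : ℝ) := by
        exact_mod_cast Nat.self_le_factorial (2 * J + 13)
    _ ≤ ((2 * J + 13).factorial : ℝ) ^ r :=
        le_self_pow₀ (by exact_mod_cast Nat.factorial_pos _) hr

section FactorialScales

variable {r q : ℕ} (hr : r ≠ 0) (hq : 2 ≤ q)

theorem intScale1_factorialScales_p_succ (J : ℕ) (t : ℝ) :
    intScale1 r q ((factorialScales r q hr hq).p (J + 1)) t =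
      ((factorialScales r q hr hq).a J : ℝ) ^ t := by
  simpa [factorialScales, mul_add] using intScale1_pow_factorial_pow hr hq (2 * J + 13) t

theorem logb_slope_factorialScales_le (J : ℕ) :
    Real.logb q ((factorialScales r q hr hq).slope J) ≤
      (1 + 1 / (2 * J + 13)) * ((2 * J + 13).factorial : ℝ) ^ r := by
  have hq1 : (1 : ℝ) < q := by exact_mod_cast hq
  have hsucc : (2 * J + 13) * ((2 * J + 12).factorial : ℝ) ^ r ≤
      ((2 * J + 13).factorial : ℝ) ^ r := by
    rw [Nat.factorial_succ (2 * J + 12), Nat.cast_mul, mul_pow]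
    gcongr
    push_cast
    rw [add_assoc]
    norm_num
    exact le_self_pow₀ (by linarith [J.cast_nonneg (α := ℝ)]) hr
  have hlog (k : ℕ) : Real.logb q ((q ^ k.factorial ^ r : ℕ) : ℝ) = (k.factorial : ℝ) ^ r := by
    rw [Nat.cast_pow, Real.logb_pow, Real.logb_self_eq_one hq1, mul_one, Nat.cast_pow]
  rw [SpikeScales.slope, Real.logb_mul (SpikeScales.p_cast_pos _ J).ne'
    (by exact_mod_cast (SpikeScales.a_pos _ J).ne')]
  simp only [factorialScales, hlog]
  rw [add_mul, one_mul, add_comm, div_mul_eq_mul_div, one_mul]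
  gcongr
  rw [le_div_iff₀' (by positivity)]
  exact hsucc

theorem le_logb_of_p_succ_le_factorialScales {J n : ℕ}
    (hn : (factorialScales r q hr hq).p (J + 1) ≤ (factorialScales r q hr hq).slope J ^ 2 * n) :
    0 < n ∧ ((2 * J + 13 + 1).factorial : ℝ) ^ r - 4 * ((2 * J + 13).factorial : ℝ) ^ r ≤
      Real.logb q n := by
  have hq1 : (1 : ℝ) < q := by exact_mod_cast hq
  have hp := (factorialScales r q hr hq).p_cast_pos (J + 1)
  have hslope := (factorialScales r q hr hq).slope_pos J
  have hn0 : 0 < n := by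
    rcases n.eq_zero_or_pos with rfl | h
    · rw [Nat.cast_zero, mul_zero] at hn
      exact absurd hn hp.not_ge
    · exact h
  refine ⟨hn0, ?_⟩
  have hlog := Real.logb_le_logb_of_le hq1 hp hn
  have hlogp : Real.logb q ((factorialScales r q hr hq).p (J + 1)) =
      ((2 * J + 13 + 1).factorial : ℝ) ^ r := by
    simp [factorialScales, Real.logb_pow, Real.logb_self_eq_one hq1, mul_add]
  have hlogslope : Real.logb q ((factorialScales r q hr hq).slope J) ≤
      2 * ((2 * J + 13).factorial : ℝ) ^ r := by
    refine (logb_slope_factorialScales_le hr hq J).trans ?_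
    gcongr
    have : 1 / (2 * J + 13 : ℝ) ≤ 1 := div_le_one_of_le₀ (by linarith [J.cast_nonneg (α := ℝ)])
      (by positivity)
    linarith
  rw [Real.logb_mul (by positivity) (by positivity), Real.logb_pow, hlogp] at hlog
  push_cast at hlog
  linarith

theorem le_intExponent_logb_of_p_succ_le_factorialScales {J n : ℕ}
    (hn : (factorialScales r q hr hq).p (J + 1) ≤ (factorialScales r q hr hq).slope J ^ 2 * n) :
    (1 - 4 / (2 * J + 14)) * ((2 * J + 13).factorial : ℝ) ^ r ≤
      intExponent r (Real.logb q n) := by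
  have hpow : (2 * J + 14 : ℝ) ≤ (2 * J + 14) ^ r :=
    le_self_pow₀ (by linarith [J.cast_nonneg (α := ℝ)]) hr
  have hcast : ((2 * J + 13 : ℕ) + 1 : ℝ) = 2 * J + 14 := by push_cast; ring
  have hbase : (2 : ℝ) ^ r ≤
      ((2 * J + 13 + 1).factorial : ℝ) ^ r - 4 * ((2 * J + 13).factorial : ℝ) ^ r := by
    have htwo : (2 : ℝ) ^ r ≤ ((2 * J + 13).factorial : ℝ) ^ r := by
      gcongr
      exact_mod_cast (by lia : 2 ≤ 2 * J + 13).trans (Nat.self_le_factorial _)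
    rw [Nat.factorial_succ, Nat.cast_mul, mul_pow, Nat.cast_succ, hcast]
    have hfive : (5 : ℝ) ≤ (2 * J + 14) ^ r := by linarith [J.cast_nonneg (α := ℝ)]
    linarith [mul_le_mul_of_nonneg_right hfive ((pow_nonneg zero_le_two r).trans htwo)]
  calc _ ≤ (1 - 4 / ((2 * J + 13 : ℕ) + 1) ^ r) * ((2 * J + 13).factorial : ℝ) ^ r := by
        rw [hcast]
        gcongr
    _ ≤ _ := le_intExponent hr (by norm_num) hbase
        (le_logb_of_p_succ_le_factorialScales hr hq hn).2

theorem eventually_mul_slope_le_intScale1 {t : ℝ} (ht : 1 < t) (C : ℝ) :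
    ∀ᶠ J in atTop, ∀ n : ℕ, (factorialScales r q hr hq).p (J + 1) ≤
      (factorialScales r q hr hq).slope J ^ 2 * n →
      C * (factorialScales r q hr hq).slope J ≤ intScale1 r q n t := by
  have hq1 : (1 : ℝ) < q := by exact_mod_cast hq
  filter_upwards [(tendsto_exponent_gap_atTop hr ht).eventually_ge_atTop (Real.logb q (max C 1))]
    with J hJ n hn
  have hslope := (factorialScales r q hr hq).slope_pos J
  have hC : 0 < max C 1 := lt_max_of_lt_right one_pos
  have hlogslope := logb_slope_factorialScales_le hr hq J
  have hexponent := mul_le_mul_of_nonneg_left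
    (le_intExponent_logb_of_p_succ_le_factorialScales hr hq hn) (zero_le_one.trans ht.le)
  rw [intScale1_eq_rpow_intExponent r hq (le_logb_of_p_succ_le_factorialScales hr hq hn).1]
  calc C * (factorialScales r q hr hq).slope J
      ≤ max C 1 * (factorialScales r q hr hq).slope J := by
        gcongr
        exact le_max_left C 1
    _ = (q : ℝ) ^ Real.logb q (max C 1 * (factorialScales r q hr hq).slope J) :=
        (Real.rpow_logb (by linarith) hq1.ne' (by positivity)).symm
    _ ≤ (q : ℝ) ^ (t * intExponent r (Real.logb q n)) := by
        refine Real.rpow_le_rpow_of_exponent_le hq1.le ?_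
        rw [Real.logb_mul hC.ne' hslope.ne']
        linarith

end FactorialScales

theorem stmt10_general {r q : ℕ} (hr : r ≠ 0) (hq : 2 ≤ q) :
    ∃ T : Torus2 → Torus2,
      IsCkTorusDiffeo ⊤ T ∧
      UniquelyErgodicWithVolume T ∧
      HasUpperMeasSlowEntropy (volume : Measure Torus2) T (intScale1 r q) 0 ∧
      HasUpperTopSlowEntropy T (intScale1 r q) 1 := by
  let s := factorialScales r q hr hq
  have htop (t : ℝ) (ht : t > 0) := tendsto_intScale1_atTop hr hq ht
  obtain ⟨β, hβ⟩ := s.exists_uniquelyErgodicWithVolume_diffeo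
  refine ⟨s.diffeo β, s.isCkTorusDiffeo_diffeo β, hβ, s.hasUpperMeasSlowEntropy_diffeo_zero β htop,
    s.hasUpperTopSlowEntropy_diffeo_one β htop (fun t _ ht1 J => ?_)
      fun t ht => eventually_mul_slope_le_intScale1 hr hq ht⟩
  have ha : (1 : ℝ) ≤ s.a J := by linarith [s.million_le_a_cast J]
  rw [intScale1_factorialScales_p_succ]
  exact (Real.rpow_le_rpow_of_exponent_le ha ht1.le).trans_eq (Real.rpow_one _)

end

/-- Failure of a variational principle for slow entropy at the
intermediate scale `a^{int1,5}`: there exist `q₁ ≥ 2` and a uniquely ergodic `C^∞`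
diffeomorphism `T` of `𝕋²`, with the Haar–Lebesgue measure as its unique invariant Borel
probability measure, whose upper measure-theoretic slow entropy at scale `a^{int1,5}`
(base `q₁`) equals `0` while its upper topological slow entropy at the same scale
equals `1`. -/
theorem stmt10 :
    ∃ q₁ : ℕ, 2 ≤ q₁ ∧ ∃ T : Torus2 → Torus2,
      IsCkTorusDiffeo ⊤ T ∧
      UniquelyErgodicWithVolume T ∧
      HasUpperMeasSlowEntropy (volume : Measure Torus2) T (intScale1 5 q₁) 0 ∧
      HasUpperTopSlowEntropy T (intScale1 5 q₁) 1 :=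
  ⟨2, le_rfl, stmt10_general (by norm_num) le_rfl⟩
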